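/- arXiv:2506.18239 — 5 statements merged into one kernel-verified Lean document; each statement's English description precedes it below -/
import Mathlib

section
/- Let k be an algebraically closed field, r ≥ 1 an integer, and [λ₁:μ₁], …, [λ_r:μ_r] pairwise distinct points of ℙ¹(k). Let g₁, …, g_r ∈ k[x,y] be nonzero homogeneous polynomials of degrees k₁, …, k_r that are pairwise coprime, and let a be an integer with 2a ≥ k₁+⋯+k_r. Consider the k-linear subspace W = {(A,B) : A, B ∈ k[x,y] homogeneous of degree a, and g_i divides λ_i A + μ_i B for every i = 1,…,r} of the 2(a+1)-dimensional space of pairs of degree-a binary forms. Then dim_k W ≥ 2a + 2 − (k₁+⋯+k_r); and if W contains a pair (A₀,B₀) with gcd(A₀,B₀) a nonzero constant, then dim_k W = 2a + 2 − (k₁+⋯+k_r) exactly. -/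
/-! The space of binary forms of degree `n` has dimension `n + 1`, and its multiples of a fixed
nonzero form of degree `m ≤ n` form a copy of the forms of degree `n - m`.  Hence each condition
`gᵢ ∣ λᵢ A + μᵢ B` is the vanishing of a linear map into a space of dimension at most `kᵢ`
(exactly `kᵢ` if `kᵢ ≤ a`, and at most `a + 1 ≤ kᵢ` otherwise), so that the `r` conditions cut
the `2 (a + 1)`-dimensional space of pairs down by at most `∑ kᵢ` (`le_finrank_Wmod`).

For the reverse inequality, fix a coprime pair `(A₀, B₀)` in `W` and consider the linear map
`(A, B) ↦ A₀ B - A B₀` on `W`.  Modulo `gᵢ` both pairs satisfy the same linear relation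
`λᵢ A + μᵢ B = 0` with constant coefficients, not both zero, so `gᵢ` divides the determinant;
by pairwise coprimality so does `∏ gᵢ`.  The image thus lies in the multiples of `∏ gᵢ` of degree
`2a`, a space of dimension `2a + 1 - ∑ kᵢ`.  By coprimality of `A₀` and `B₀` the kernel is the line
spanned by `(A₀, B₀)`, and the total is at most `2a + 2 - ∑ kᵢ` (`finrank_Wmod_le`). -/

open scoped BigOperators
open Filter

noncomputable section

/-- Binary forms live in the polynomial ring in two variables. -/
abbrev BForm (K : Type) [Field K] := MvPolynomial (Fin 2) K

/-- The space `W` of pairs `(A, B)` of binary forms of degree `a` such that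
`gᵢ ∣ λᵢ A + μᵢ B` for every `i`. -/
def Wmod (K : Type) [Field K] (r a : ℕ) (lam mu : Fin r → K) (g : Fin r → BForm K) :
    Submodule K (BForm K × BForm K) where
  carrier := {p | MvPolynomial.IsHomogeneous p.1 a ∧ MvPolynomial.IsHomogeneous p.2 a ∧
    ∀ i, g i ∣ (MvPolynomial.C (lam i) * p.1 + MvPolynomial.C (mu i) * p.2)}
  add_mem' := by
    rintro p q ⟨hp1, hp2, hp3⟩ ⟨hq1, hq2, hq3⟩
    refine ⟨hp1.add hq1, hp2.add hq2, fun i => ?_⟩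
    have h := dvd_add (hp3 i) (hq3 i)
    convert h using 1
    simp only [Prod.fst_add, Prod.snd_add]
    ring
  zero_mem' := by
    refine ⟨?_, ?_, fun i => ?_⟩ <;>
      simp [MvPolynomial.isHomogeneous_zero]
  smul_mem' := by
    rintro t p ⟨hp1, hp2, hp3⟩
    refine ⟨?_, ?_, fun i => ?_⟩
    · simpa [Prod.smul_fst, MvPolynomial.smul_eq_C_mul] using
        (MvPolynomial.isHomogeneous_C _ t).mul hp1
    · simpa [Prod.smul_snd, MvPolynomial.smul_eq_C_mul] using
        (MvPolynomial.isHomogeneous_C _ t).mul hp2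
    · have h := (hp3 i).mul_left (MvPolynomial.C t)
      convert h using 1
      simp only [Prod.smul_fst, Prod.smul_snd, MvPolynomial.smul_eq_C_mul]
      ring

open MvPolynomial

theorem finrank_map_of_injective {K V V' : Type} [Field K] [AddCommGroup V] [Module K V]
    [AddCommGroup V'] [Module K V'] (f : V →ₗ[K] V') (hf : Function.Injective f)
    (S : Submodule K V) : Module.finrank K (S.map f) = Module.finrank K S :=
  (S.equivMapOfInjective f hf).finrank_eq.symm

/-- The monomials `x ^ i * y ^ (n - i)`, for `0 ≤ i ≤ n`, index a basis. -/
theorem finrank_binaryForms (K : Type) [Field K] (n : ℕ) :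
    Module.finrank K (homogeneousSubmodule (Fin 2) K n) = n + 1 := by
  rw [homogeneousSubmodule_eq_finsupp_supported]
  have e : Fin (n + 1) ≃ {d : Fin 2 →₀ ℕ | d.degree = n} :=
    { toFun := fun i => ⟨Finsupp.equivFunOnFinite.symm ![(i : ℕ), n - i], by
        have := i.2
        simp [Finsupp.degree_eq_sum]
        omega⟩
      invFun := fun d => ⟨d.1 0, by
        have := d.2
        simp [Finsupp.degree_eq_sum] at this
        omega⟩
      left_inv := fun i => by simp
      right_inv := fun d => by
        have := d.2
        simp [Finsupp.degree_eq_sum] at this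
        ext j
        fin_cases j
        · simp
        · simp
          omega }
  have : Fintype {d : Fin 2 →₀ ℕ | d.degree = n} := Fintype.ofEquiv _ e
  rw [(AddMonoidAlgebra.supportedEquivFinsupp {d : Fin 2 →₀ ℕ | d.degree = n}).finrank_eq,
    Module.finrank_finsupp_self, ← Fintype.card_congr e, Fintype.card_fin]

instance finite_binaryForms (K : Type) [Field K] (n : ℕ) :
    Module.Finite K (homogeneousSubmodule (Fin 2) K n) :=
  Module.Finite.of_fg (homogeneousSubmodule_fg (Fin 2) K n)

/-- The forms of degree `n` divisible by `g`. -/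
def multiples (K : Type) [Field K] (g : BForm K) (n : ℕ) : Submodule K (BForm K) :=
  homogeneousSubmodule (Fin 2) K n ⊓ (Ideal.span {g}).restrictScalars K

theorem mem_multiples {K : Type} [Field K] {g : BForm K} {n : ℕ} {p : BForm K} :
    p ∈ multiples K g n ↔ p.IsHomogeneous n ∧ g ∣ p := by
  simp [multiples, Ideal.mem_span_singleton]

/-- A form of degree `m + n` divisible by a form `g` of degree `m` is `g` times a form of
degree `n`: discard the other homogeneous components of the quotient. -/
theorem exists_homogeneous_quotient {K : Type} [Field K] {g p : BForm K} {m n : ℕ}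
    (hg : g.IsHomogeneous m) (hp : p.IsHomogeneous (m + n)) (h : g ∣ p) :
    ∃ q : BForm K, q.IsHomogeneous n ∧ p = g * q := by
  obtain ⟨q, rfl⟩ := h
  let : GradedAlgebra (homogeneousSubmodule (Fin 2) K) := gradedAlgebra
  refine ⟨_, (DirectSum.decompose (homogeneousSubmodule (Fin 2) K) q n).2, ?_⟩
  have h1 := DirectSum.coe_decompose_mul_add_of_left_mem (homogeneousSubmodule (Fin 2) K)
    (j := n) (b := q) hg
  rw [← h1]
  exact (DirectSum.decompose_of_mem_same _ hp).symm

theorem finrank_multiples {K : Type} [Field K] {g : BForm K} {m : ℕ} (n : ℕ) (h0 : g ≠ 0)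
    (hg : g.IsHomogeneous m) : Module.finrank K (multiples K g (m + n)) = n + 1 := by
  rw [← finrank_binaryForms K n]
  have : multiples K g (m + n) =
      (homogeneousSubmodule (Fin 2) K n).map (LinearMap.mulLeft K g) := by
    ext p
    rw [mem_multiples, Submodule.mem_map]
    constructor
    · rintro ⟨hp, hd⟩
      obtain ⟨q, hq, rfl⟩ := exists_homogeneous_quotient hg hp hd
      exact ⟨q, hq, rfl⟩
    · rintro ⟨q, hq, rfl⟩
      exact ⟨hg.mul hq, dvd_mul_right g q⟩
  rw [this]
  exact finrank_map_of_injective _ (mul_right_injective₀ h0) _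

/-- Divisibility by a form of degree `m` imposes at most `m` linear conditions on the forms of
degree `n`. -/
theorem finrank_quotient_multiples_le {K : Type} [Field K] {g : BForm K} {m : ℕ} (n : ℕ)
    (h0 : g ≠ 0) (hg : g.IsHomogeneous m) :
    Module.finrank K (homogeneousSubmodule (Fin 2) K n ⧸
      (multiples K g n).submoduleOf (homogeneousSubmodule (Fin 2) K n)) ≤ m := by
  have h1 : Module.finrank K (homogeneousSubmodule (Fin 2) K n ⧸
      (multiples K g n).submoduleOf (homogeneousSubmodule (Fin 2) K n)) + _ = _ :=
    Submodule.finrank_quotient_add_finrank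
      ((multiples K g n).submoduleOf (homogeneousSubmodule (Fin 2) K n))
  rw [finrank_binaryForms] at h1
  rcases Nat.lt_or_ge n m with h | h
  · omega
  · obtain ⟨l, rfl⟩ := Nat.exists_eq_add_of_le h
    rw [(Submodule.submoduleOfEquivOfLe (show multiples K g (m + l) ≤ _ from
      inf_le_left)).finrank_eq, finrank_multiples l h0 hg] at h1
    omega

/-- Conditions `f i v ∈ S i` with `S i` of codimension at most `k i` cut a space down by at most
`∑ k i`, by rank-nullity for the map into the product of the quotients. -/
theorem finrank_le_finrank_iInf_comap_add {K ι V V' : Type} [Field K] [Fintype ι] [AddCommGroup V]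
    [Module K V] [Module.Finite K V] [AddCommGroup V'] [Module K V'] [Module.Finite K V']
    (f : ι → V →ₗ[K] V') (S : ι → Submodule K V') (k : ι → ℕ)
    (h : ∀ i, Module.finrank K (V' ⧸ S i) ≤ k i) :
    Module.finrank K V ≤
      Module.finrank K (⨅ i, (S i).comap (f i) : Submodule K V) + ∑ i, k i := by
  have hker : LinearMap.ker (LinearMap.pi fun i => (S i).mkQ.comp (f i)) =
      ⨅ i, (S i).comap (f i) := by
    simp [LinearMap.ker_pi, LinearMap.ker_comp]
  have h1 := (LinearMap.pi fun i => (S i).mkQ.comp (f i)).finrank_range_add_finrank_ker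
  have h2 := (LinearMap.range (LinearMap.pi fun i => (S i).mkQ.comp (f i))).finrank_le
  rw [Module.finrank_pi_fintype] at h2
  have h3 := Finset.sum_le_sum fun i (_ : i ∈ Finset.univ) => h i
  rw [hker] at h1
  omega

/-- The linear map `(A, B) ↦ l A + m B` on pairs of forms of degree `a`. -/
def combination (K : Type) [Field K] (a : ℕ) (l m : K) :
    (homogeneousSubmodule (Fin 2) K a × homogeneousSubmodule (Fin 2) K a) →ₗ[K]
      homogeneousSubmodule (Fin 2) K a :=
  l • LinearMap.fst K _ _ + m • LinearMap.snd K _ _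

/-- The space `W`, viewed inside the pairs of forms of degree `a`. -/
def incidence (K : Type) [Field K] (r a : ℕ) (lam mu : Fin r → K) (g : Fin r → BForm K) :
    Submodule K (homogeneousSubmodule (Fin 2) K a × homogeneousSubmodule (Fin 2) K a) :=
  ⨅ i, ((multiples K (g i) a).submoduleOf (homogeneousSubmodule (Fin 2) K a)).comap
    (combination K a (lam i) (mu i))

theorem map_incidence (K : Type) [Field K] (r a : ℕ) (lam mu : Fin r → K)
    (g : Fin r → BForm K) :
    (incidence K r a lam mu g).map
      ((homogeneousSubmodule (Fin 2) K a).subtype.prodMap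
        (homogeneousSubmodule (Fin 2) K a).subtype) = Wmod K r a lam mu g := by
  have key : ∀ p : homogeneousSubmodule (Fin 2) K a × homogeneousSubmodule (Fin 2) K a,
      p ∈ incidence K r a lam mu g ↔
        ∀ i, g i ∣ C (lam i) * (p.1 : BForm K) + C (mu i) * (p.2 : BForm K) := by
    intro p
    rw [incidence, Submodule.mem_iInf]
    refine forall_congr' fun i => ?_
    have : combination K a (lam i) (mu i) p = lam i • p.1 + mu i • p.2 := rfl
    rw [Submodule.mem_comap, this, Submodule.submoduleOf, Submodule.mem_comap,
      Submodule.subtype_apply, mem_multiples]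
    simp only [Submodule.coe_add, Submodule.coe_smul, smul_eq_C_mul]
    refine and_iff_right ?_
    exact (p.1.2.C_mul _).add (p.2.2.C_mul _)
  ext ⟨A, B⟩
  constructor
  · rintro ⟨p, hp, h⟩
    obtain ⟨rfl, rfl⟩ := Prod.mk.inj h
    exact ⟨p.1.2, p.2.2, (key p).1 hp⟩
  · rintro ⟨hA, hB, h⟩
    exact ⟨(⟨A, hA⟩, ⟨B, hB⟩), (key _).2 h, rfl⟩

theorem finite_Wmod (K : Type) [Field K] (r a : ℕ) (lam mu : Fin r → K) (g : Fin r → BForm K) :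
    Module.Finite K (Wmod K r a lam mu g) := by
  rw [← map_incidence]
  infer_instance

theorem le_finrank_Wmod (K : Type) [Field K] (r a : ℕ) (lam mu : Fin r → K)
    (g : Fin r → BForm K) (hg0 : ∀ i, g i ≠ 0) (k : Fin r → ℕ)
    (hgdeg : ∀ i, (g i).IsHomogeneous (k i)) :
    2 * a + 2 ≤ Module.finrank K (Wmod K r a lam mu g) + ∑ i, k i := by
  have hinj : Function.Injective ((homogeneousSubmodule (Fin 2) K a).subtype.prodMap
      (homogeneousSubmodule (Fin 2) K a).subtype) :=
    Function.Injective.prodMap Subtype.val_injective Subtype.val_injective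
  rw [← map_incidence, finrank_map_of_injective _ hinj]
  have h1 := finrank_le_finrank_iInf_comap_add (fun i => combination K a (lam i) (mu i)) _ k
    fun i => finrank_quotient_multiples_le a (hg0 i) (hgdeg i)
  rw [Module.finrank_prod, finrank_binaryForms] at h1
  unfold incidence
  omega

/-- Two pairs in `W` are proportional modulo `gᵢ`, so `gᵢ` divides their determinant. -/
theorem dvd_det_of_mem {K : Type} [Field K] {g A B A₀ B₀ : BForm K} {l m : K}
    (hlm : (l, m) ≠ (0, 0)) (h : g ∣ C l * A + C m * B) (h₀ : g ∣ C l * A₀ + C m * B₀) :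
    g ∣ A₀ * B - A * B₀ := by
  by_cases hl : l = 0
  · have hm : m ≠ 0 := by
      rintro rfl
      exact hlm (by rw [hl])
    have hu : IsUnit (C m : BForm K) := (isUnit_iff_ne_zero.2 hm).map C
    rw [← hu.dvd_mul_left]
    convert (h.mul_left A₀).sub (h₀.mul_left A) using 1
    ring
  · have hu : IsUnit (C l : BForm K) := (isUnit_iff_ne_zero.2 hl).map C
    rw [← hu.dvd_mul_left]
    convert (h₀.mul_left B).sub (h.mul_left B₀) using 1
    ring

/-- The ratio of two forms of the same degree, when it is a polynomial, is a constant. -/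
theorem exists_eq_C_mul {K : Type} [Field K] {A A₀ : BForm K} {a : ℕ} (hA : A.IsHomogeneous a)
    (hA₀ : A₀.IsHomogeneous a) (h : A₀ ∣ A) : ∃ c : K, A = C c * A₀ := by
  obtain ⟨q, hq, rfl⟩ := exists_homogeneous_quotient (n := 0) hA₀ hA h
  rw [← totalDegree_zero_iff_isHomogeneous, totalDegree_eq_zero_iff_eq_C] at hq
  exact ⟨coeff 0 q, by rw [← hq, mul_comm]⟩

theorem exists_smul_of_det_eq_zero {K : Type} [Field K] {A B A₀ B₀ : BForm K} {a : ℕ}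
    (hA : A.IsHomogeneous a) (hB : B.IsHomogeneous a) (hA₀ : A₀.IsHomogeneous a)
    (hB₀ : B₀.IsHomogeneous a) (hc : IsRelPrime A₀ B₀) (h : A₀ * B = A * B₀) :
    ∃ c : K, c • (A₀, B₀) = (A, B) := by
  by_cases h0 : A₀ = 0
  · have h1 : B₀ ≠ 0 := by
      rintro rfl
      rw [h0, isRelPrime_zero_left] at hc
      exact not_isUnit_zero hc
    obtain ⟨c, rfl⟩ := exists_eq_C_mul hB hB₀ (hc.symm.dvd_of_dvd_mul_left ⟨A, by rw [h, mul_comm]⟩)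
    have h2 : A = C c * A₀ := mul_right_cancel₀ h1 (by rw [← h]; ring)
    exact ⟨c, by rw [h2, Prod.smul_mk, smul_eq_C_mul, smul_eq_C_mul]⟩
  · obtain ⟨c, rfl⟩ := exists_eq_C_mul hA hA₀ (hc.dvd_of_dvd_mul_right ⟨B, h.symm⟩)
    have h2 : B = C c * B₀ := mul_left_cancel₀ h0 (by rw [h]; ring)
    exact ⟨c, by rw [h2, Prod.smul_mk, smul_eq_C_mul, smul_eq_C_mul]⟩

/-- The determinant `(A, B) ↦ A₀ B - A B₀` against a fixed pair. -/
def detMap {K : Type} [Field K] (A₀ B₀ : BForm K) : (BForm K × BForm K) →ₗ[K] BForm K :=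
  (LinearMap.mulLeft K A₀).comp (LinearMap.snd K _ _) -
    (LinearMap.mulRight K B₀).comp (LinearMap.fst K _ _)

theorem detMap_apply {K : Type} [Field K] (A₀ B₀ : BForm K) (p : BForm K × BForm K) :
    detMap A₀ B₀ p = A₀ * p.2 - p.1 * B₀ := rfl

theorem finrank_Wmod_le (K : Type) [Field K] (r a : ℕ) (lam mu : Fin r → K)
    (hpts : ∀ i, (lam i, mu i) ≠ (0, 0)) (g : Fin r → BForm K) (hg0 : ∀ i, g i ≠ 0)
    (k : Fin r → ℕ) (hgdeg : ∀ i, (g i).IsHomogeneous (k i))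
    (hcop : ∀ i j, i ≠ j → IsRelPrime (g i) (g j)) (ha : ∑ i, k i ≤ 2 * a)
    (A₀ B₀ : BForm K) (hW : (A₀, B₀) ∈ Wmod K r a lam mu g) (hc : IsRelPrime A₀ B₀) :
    Module.finrank K (Wmod K r a lam mu g) + ∑ i, k i ≤ 2 * a + 2 := by
  have := finite_Wmod K r a lam mu g
  obtain ⟨hA₀, hB₀, hd₀⟩ := hW
  obtain ⟨n, hn⟩ := Nat.exists_eq_add_of_le ha
  set f := (detMap A₀ B₀).domRestrict (Wmod K r a lam mu g) with hf
  have hrange : LinearMap.range f ≤ multiples K (∏ i, g i) (2 * a) := by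
    rintro _ ⟨⟨⟨A, B⟩, hA, hB, hd⟩, rfl⟩
    rw [hf, LinearMap.domRestrict_apply, detMap_apply, mem_multiples]
    refine ⟨?_, Fintype.prod_dvd_of_isRelPrime (fun i j hij => hcop i j hij) fun i =>
      dvd_det_of_mem (hpts i) (hd i) (hd₀ i)⟩
    rw [two_mul]
    exact (hA₀.mul hB).sub (hA.mul hB₀)
  have hker : (LinearMap.ker f).map (Wmod K r a lam mu g).subtype ≤ K ∙ (A₀, B₀) := by
    rintro _ ⟨⟨⟨A, B⟩, hA, hB, hd⟩, h, rfl⟩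
    have h' : A₀ * B - A * B₀ = 0 := h
    exact Submodule.mem_span_singleton.2
      (exists_smul_of_det_eq_zero hA hB hA₀ hB₀ hc (sub_eq_zero.1 h'))
  have h1 := f.finrank_range_add_finrank_ker
  have h2 : Module.finrank K (LinearMap.range f) ≤ n + 1 := by
    rw [← finrank_multiples n (Finset.prod_ne_zero_iff.2 fun i _ => hg0 i)
      (IsHomogeneous.prod Finset.univ g k fun i _ => hgdeg i), ← hn]
    have : Module.Finite K (multiples K (∏ i, g i) (2 * a)) :=
      Submodule.finiteDimensional_of_le
        (inf_le_left : multiples K (∏ i, g i) (2 * a) ≤ homogeneousSubmodule (Fin 2) K (2 * a))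
    exact Submodule.finrank_mono hrange
  have h3 : Module.finrank K (LinearMap.ker f) ≤ 1 := by
    rw [← finrank_map_of_injective (Wmod K r a lam mu g).subtype
      Subtype.val_injective]
    exact (Submodule.finrank_mono hker).trans ((finrank_span_le_card _).trans (by simp))
  omega

/-- Let `k` be an algebraically closed field, `[λᵢ : μᵢ]` pairwise distinct points of
`ℙ¹(k)`, and `gᵢ` nonzero, pairwise coprime binary forms of degrees `kᵢ`.  If
`2a ≥ Σkᵢ`, then the space `W` of pairs `(A, B)` of degree-`a` binary forms with
`gᵢ ∣ λᵢA + μᵢB` for all `i` has dimension at least `2a + 2 − Σkᵢ`; moreover, if `W`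
contains a coprime pair, its dimension is exactly `2a + 2 − Σkᵢ`. -/
theorem dim_bound_of_incidence_space (K : Type) [Field K] [IsAlgClosed K]
    (r : ℕ) (hr : 1 ≤ r) (lam mu : Fin r → K)
    (hpts : ∀ i, (lam i, mu i) ≠ (0, 0))
    (hdist : ∀ i j, i ≠ j → lam i * mu j ≠ lam j * mu i)
    (g : Fin r → BForm K) (hg0 : ∀ i, g i ≠ 0) (k : Fin r → ℕ)
    (hgdeg : ∀ i, MvPolynomial.IsHomogeneous (g i) (k i))
    (hcop : ∀ i j, i ≠ j → ∀ d : BForm K, d ∣ g i → d ∣ g j → IsUnit d)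
    (a : ℕ) (ha : ∑ i, k i ≤ 2 * a) :
    ((2 * a + 2 : ℤ) - ∑ i, (k i : ℤ) ≤
        (Module.finrank K (Wmod K r a lam mu g) : ℤ)) ∧
    (∀ A B : BForm K, (A, B) ∈ Wmod K r a lam mu g →
      (∀ d : BForm K, d ∣ A → d ∣ B → IsUnit d) →
      (Module.finrank K (Wmod K r a lam mu g) : ℤ) =
        (2 * a + 2 : ℤ) - ∑ i, (k i : ℤ)) := by
  have h1 := le_finrank_Wmod K r a lam mu g hg0 k hgdeg
  refine ⟨by push_cast [← Nat.cast_sum]; omega, fun A B hW hc => ?_⟩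
  have h2 := finrank_Wmod_le K r a lam mu hpts g hg0 k hgdeg
    (fun i j hij d => hcop i j hij d) ha A B hW (fun d => hc d)
  rw [← Nat.cast_sum]
  omega

end
end

section
/- Let k be an algebraically closed field, r ≥ 1 an integer, and [λ₁:μ₁], …, [λ_r:μ_r] pairwise distinct points of ℙ¹(k). Let g₁, …, g_r ∈ k[x,y] be nonzero homogeneous polynomials of degrees k₁, …, k_r that are pairwise coprime, and let a be an integer with k₁+⋯+k_r ≤ a. Then there exist homogeneous A, B ∈ k[x,y] of degree a with gcd(A,B) a nonzero constant such that g_i divides λ_i A + μ_i B for every i = 1,…,r. -/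
/-!
The pair is built from univariate polynomials and then homogenized.

Since `K` is infinite, there is a point `(s, t)` with `s ≠ 0` at which no `gᵢ` vanishes; after a
linear change of coordinates this point is `(1, 0)`.  Then `gᵢ` is the homogenization of a
polynomial `pᵢ = gᵢ(X, 1)` of degree exactly `kᵢ`, and the `pᵢ` are pairwise coprime in `K[X]`.

The Chinese remainder theorem gives `A₀, B₀` with `A₀ ≡ -μᵢ` and `B₀ ≡ λᵢ` modulo every `pᵢ`,
so that `pᵢ ∣ λᵢ A₀ + μᵢ B₀`.  With `P = ∏ pᵢ`, both may be altered by multiples of `P`, so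
`B₀` can be taken nonzero of degree at most `deg P`, and `A₀` can be replaced by
`A = A₀ + c P (X - t)ᵐ` of degree exactly `a`, where `t` is not a root of `B₀`.  At a root of `P`
the values of `A` and `B₀` are `-μᵢ` and `λᵢ` for some `i`, hence not both zero; at each of the
finitely many other roots of `B₀` only one value of `c` makes `A` vanish.  So `A` and `B₀` are
coprime for a suitable `c` (`exists_isCoprime_univariate`).

Homogenizing a Bézout identity for `A, B₀` shows that a common divisor of their homogenizations
divides a power of `X₁`, and it is a unit because `X₁` does not divide the homogenization of `A`,
whose coefficient at `X₀ᵃ` is nonzero (`isUnit_of_dvd_homogenize`).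
-/

open scoped BigOperators
open Filter

noncomputable section

section Helpers

open Polynomial

variable {K : Type} [Field K]

/-- The univariate form of the theorem.  The condition on the coefficient of `A` at `Xᵃ` says
that the homogenization of `A` in degree `a` does not vanish at infinity. -/
lemma exists_isCoprime_univariate [IsAlgClosed K] {ι : Type} [Fintype ι]
    (p : ι → K[X]) (hp : ∀ i, p i ≠ 0) (hcop : Pairwise (Function.onFun IsCoprime p))
    (lam mu : ι → K) (hpts : ∀ i, (lam i, mu i) ≠ (0, 0))
    (a : ℕ) (ha : ∑ i, (p i).natDegree ≤ a) :
    ∃ A B : K[X], A.natDegree ≤ a ∧ A.coeff a ≠ 0 ∧ B.natDegree ≤ a ∧ IsCoprime A B ∧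
      ∀ i, p i ∣ C (lam i) * A + C (mu i) * B := by
  classical
  have hcopI : Pairwise (Function.onFun IsCoprime fun i ↦ Ideal.span {p i}) := fun i j hij ↦
    Ideal.isCoprime_span_singleton_iff _ _ |>.2 (hcop hij)
  obtain ⟨A₁, hA₁⟩ := Ideal.exists_forall_sub_mem_ideal hcopI fun i ↦ C (-mu i)
  obtain ⟨B₁, hB₁⟩ := Ideal.exists_forall_sub_mem_ideal hcopI fun i ↦ C (lam i)
  simp only [Ideal.mem_span_singleton] at hA₁ hB₁
  set P : K[X] := ∏ i, p i with hPdef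
  have hP : P ≠ 0 := Finset.prod_ne_zero_iff.2 fun i _ ↦ hp i
  have hPdeg : P.natDegree = ∑ i, (p i).natDegree := natDegree_prod _ _ fun i _ ↦ hp i
  have hpP : ∀ i, p i ∣ P := fun i ↦ Finset.dvd_prod_of_mem _ (Finset.mem_univ i)
  have hmod : ∀ (F : K[X]) i, p i ∣ F % P - F := fun F i ↦ by
    have h : F % P - F = -(P * (F / P)) := by
      linear_combination EuclideanDomain.mod_add_div F P
    rw [h]
    exact (dvd_mul_of_dvd_left (hpP i) _).neg_right
  have hlt : ∀ F : K[X], (F % P).degree < P.degree := fun F ↦ EuclideanDomain.mod_lt F hP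
  -- Adding `P` to the remainder makes it nonzero without raising the degree above `deg P`.
  set B : K[X] := B₁ % P + P with hB
  have hBdeg : B.degree = P.degree := degree_add_eq_right_of_degree_lt (hlt B₁)
  have hB0 : B ≠ 0 := by
    rw [← degree_ne_bot, hBdeg, degree_ne_bot]
    exact hP
  obtain ⟨t, ht⟩ := Infinite.exists_notMem_finset B.roots.toFinset
  have ht : B.eval t ≠ 0 := by simpa [hB0] using ht
  set Q : K[X] := P * (X - C t) ^ (a - P.natDegree) with hQ
  have hQ0 : Q ≠ 0 := mul_ne_zero hP (pow_ne_zero _ (X_sub_C_ne_zero t))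
  have hQdeg : Q.natDegree = a := by
    rw [hQ, natDegree_mul hP (pow_ne_zero _ (X_sub_C_ne_zero t)), natDegree_pow,
      natDegree_X_sub_C]
    omega
  -- The finset consists of `0` and, for each root `b` of `B` with `Q(b) ≠ 0`, the only `c` for
  -- which `A₁ % P + c Q` vanishes at `b`.
  obtain ⟨c, hc⟩ := Infinite.exists_notMem_finset
    (insert 0 (B.roots.toFinset.image fun b ↦ -(A₁ % P).eval b / Q.eval b))
  simp only [Finset.mem_insert, Finset.mem_image, Multiset.mem_toFinset, mem_roots hB0,
    IsRoot.def, not_or, not_exists, not_and] at hc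
  obtain ⟨hc0, hc⟩ := hc
  have hA₁deg : (A₁ % P).degree < Q.degree := (hlt A₁).trans_le (by
    rw [degree_eq_natDegree hP, degree_eq_natDegree hQ0]
    exact_mod_cast by omega)
  have hAi : ∀ i, p i ∣ A₁ % P + C c * Q - C (-mu i) := fun i ↦ by
    have h := ((hmod A₁ i).add (hA₁ i)).add
      ((hpP i).mul_right ((X - C t) ^ (a - P.natDegree) * C c))
    convert h using 1
    rw [hQ]; ring
  have hBi : ∀ i, p i ∣ B - C (lam i) := fun i ↦ by
    have h := ((hmod B₁ i).add (hB₁ i)).add (hpP i)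
    convert h using 1
    rw [hB]; ring
  refine ⟨A₁ % P + C c * Q, B, ?_, ?_, ?_, ?_, fun i ↦ ?_⟩
  · refine natDegree_add_le_of_degree_le ?_ ((natDegree_C_mul_le _ _).trans hQdeg.le)
    exact (natDegree_le_natDegree hA₁deg.le).trans hQdeg.le
  · have h1 : (A₁ % P).coeff a = 0 := by
      apply coeff_eq_zero_of_degree_lt
      rwa [degree_eq_natDegree hQ0, hQdeg] at hA₁deg
    rw [coeff_add, h1, zero_add, coeff_C_mul, ← hQdeg]
    exact mul_ne_zero hc0 (leadingCoeff_ne_zero.2 hQ0)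
  · rw [natDegree_eq_of_degree_eq hBdeg]
    omega
  · refine (isCoprime_iff_aeval_ne_zero_of_isAlgClosed K K _ _).2 fun b ↦ ?_
    simp only [coe_aeval_eq_eval]
    by_contra! hb
    obtain ⟨hb1, hb2⟩ := hb
    by_cases hPb : P.eval b = 0
    · obtain ⟨i, -, hi⟩ := Finset.prod_eq_zero_iff.1 ((eval_prod _ _ _).symm.trans hPb)
      have h1 := eval_eq_zero_of_dvd_of_eval_eq_zero (hAi i) hi
      have h2 := eval_eq_zero_of_dvd_of_eval_eq_zero (hBi i) hi
      rw [eval_sub, hb1, eval_C] at h1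
      rw [eval_sub, hb2, eval_C] at h2
      exact hpts i (Prod.ext (by linear_combination -h2) (by linear_combination h1))
    · have hbt : b ≠ t := fun h ↦ ht (h ▸ hb2)
      have hQb : Q.eval b ≠ 0 := by
        simp only [hQ, eval_mul, eval_pow, eval_sub, eval_X, eval_C]
        exact mul_ne_zero hPb (pow_ne_zero _ (sub_ne_zero.2 hbt))
      apply hc b hb2
      rw [div_eq_iff hQb]
      simp only [eval_add, eval_mul, eval_C] at hb1
      linear_combination -hb1
  · have h := ((hAi i).mul_left (C (lam i))).add ((hBi i).mul_left (C (mu i)))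
    convert h using 1
    simp only [C_neg]
    ring

lemma eval_homogenize_one_zero (p : K[X]) (n : ℕ) :
    MvPolynomial.eval ![1, 0] (p.homogenize n) = p.coeff n := by
  rw [homogenize, map_sum, Finset.sum_eq_single (n, 0)]
  · simp [MvPolynomial.eval_monomial, Finsupp.prod_fintype]
  · rintro ⟨i, j⟩ hij hne
    have hj : j ≠ 0 := by
      rintro rfl
      simp_all
    simp [MvPolynomial.eval_monomial, Finsupp.prod_fintype, hj]
  · simp

/-- Coprime univariate polynomials have coprime homogenizations in degree `a`, as long as one of
them has degree exactly `a`, so that infinity is not a common zero. -/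
lemma isUnit_of_dvd_homogenize {A B : K[X]} {a : ℕ} (hA : A.natDegree ≤ a)
    (hAa : A.coeff a ≠ 0) (hB : B.natDegree ≤ a) (hAB : IsCoprime A B)
    {d : MvPolynomial (Fin 2) K} (hdA : d ∣ A.homogenize a) (hdB : d ∣ B.homogenize a) :
    IsUnit d := by
  obtain ⟨u, v, huv⟩ := hAB
  have hd : d ∣ MvPolynomial.X 1 ^ (max u.natDegree v.natDegree + a) := by
    rw [← homogenize_one, ← huv, homogenize_add, homogenize_mul _ _ (le_max_left _ _) hA,
      homogenize_mul _ _ (le_max_right _ _) hB]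
    exact (hdA.mul_left _).add (hdB.mul_left _)
  obtain ⟨j, -, hj⟩ := (dvd_prime_pow MvPolynomial.X_prime _).1 hd
  rcases Nat.eq_zero_or_pos j with rfl | hj0
  · simpa using hj.isUnit_iff
  · obtain ⟨q, hq⟩ := ((dvd_pow_self _ hj0.ne').trans hj.symm.dvd).trans hdA
    refine absurd ?_ hAa
    rw [← eval_homogenize_one_zero, hq]
    simp

/-- The theorem under the assumption that no `gᵢ` vanishes at `(1, 0)`, i.e. that
dehomogenization preserves degrees. -/
lemma exists_coprime_pair_of_eval_ne_zero [IsAlgClosed K] {ι : Type} [Fintype ι]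
    (lam mu : ι → K) (hpts : ∀ i, (lam i, mu i) ≠ (0, 0))
    (g : ι → MvPolynomial (Fin 2) K) (hg : ∀ i, MvPolynomial.eval ![1, 0] (g i) ≠ 0)
    (k : ι → ℕ) (hgdeg : ∀ i, (g i).IsHomogeneous (k i))
    (hcop : ∀ i j, i ≠ j → IsRelPrime (g i) (g j))
    (a : ℕ) (ha : ∑ i, k i ≤ a) :
    ∃ A B : MvPolynomial (Fin 2) K, A.IsHomogeneous a ∧ B.IsHomogeneous a ∧
      IsRelPrime A B ∧
      ∀ i, g i ∣ MvPolynomial.C (lam i) * A + MvPolynomial.C (mu i) * B := by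
  set p : ι → K[X] := fun i ↦ MvPolynomial.aeval ![X, 1] (g i) with hp
  have hpg : ∀ i, (p i).homogenize (k i) = g i := fun i ↦
    homogenize_eq_of_isHomogeneous (hgdeg i) rfl
  have hcoeff : ∀ i, (p i).coeff (k i) ≠ 0 := fun i ↦ by
    rw [← eval_homogenize_one_zero, hpg]
    exact hg i
  have hdeg : ∀ i, (p i).natDegree = k i := fun i ↦ by
    refine le_antisymm ?_ (le_natDegree_of_ne_zero (hcoeff i))
    have h := MvPolynomial.aeval_natDegree_le (m := k i) (n := 1) (g i)
      (hgdeg i).totalDegree_le ![X, 1] (by simp [Fin.forall_fin_two])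
    simpa using h
  have hp0 : ∀ i, p i ≠ 0 := fun i h ↦ hcoeff i (by simp [h])
  have hpcop : Pairwise (Function.onFun IsCoprime p) := fun i j hij ↦ by
    refine IsRelPrime.isCoprime fun d hdi hdj ↦ ?_
    have hi := homogenize_dvd hdi
    have hj := homogenize_dvd hdj
    rw [hdeg, hpg] at hi hj
    have := (hcop i j hij hi hj).map (MvPolynomial.aeval (R := K) ![(X : K[X]), 1])
    rwa [aeval_homogenize_X_one _ le_rfl] at this
  obtain ⟨A, B, hA, hAa, hB, hAB, hdvd⟩ := exists_isCoprime_univariate p hp0 hpcop lam mu hpts a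
    (by simpa only [hdeg] using ha)
  refine ⟨A.homogenize a, B.homogenize a, isHomogeneous_homogenize _, isHomogeneous_homogenize _,
    fun d hdA hdB ↦ isUnit_of_dvd_homogenize hA hAa hB hAB hdA hdB, fun i ↦ ?_⟩
  obtain ⟨q, hq⟩ := hdvd i
  rw [← homogenize_C_mul, ← homogenize_C_mul, ← homogenize_add, hq]
  have hka : k i ≤ a := (Finset.single_le_sum (fun _ _ ↦ Nat.zero_le _)
    (Finset.mem_univ i)).trans ha
  have hqdeg : q.natDegree ≤ a - k i := by
    rcases eq_or_ne q 0 with rfl | hq0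
    · simp
    · have h : (p i * q).natDegree ≤ a := by
        rw [← hq]
        exact natDegree_add_le_of_degree_le ((natDegree_C_mul_le _ _).trans hA)
          ((natDegree_C_mul_le _ _).trans hB)
      rw [natDegree_mul (hp0 i) hq0, hdeg] at h
      omega
  rw [← Nat.add_sub_of_le hka, homogenize_mul _ _ (hdeg i).le hqdeg, hpg]
  exact dvd_mul_right _ _

/-- The linear substitution `X₀ ↦ s X₀`, `X₁ ↦ t X₀ + X₁`, which moves the point `(1, 0)`
to `(s, t)`. -/
def shear (s t : K) (hs : s ≠ 0) : MvPolynomial (Fin 2) K ≃ₐ[K] MvPolynomial (Fin 2) K :=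
  AlgEquiv.ofAlgHom
    (MvPolynomial.aeval ![MvPolynomial.C s * MvPolynomial.X 0,
      MvPolynomial.C t * MvPolynomial.X 0 + MvPolynomial.X 1])
    (MvPolynomial.aeval ![MvPolynomial.C s⁻¹ * MvPolynomial.X 0,
      MvPolynomial.C (-(t * s⁻¹)) * MvPolynomial.X 0 + MvPolynomial.X 1])
    (by
      have h : (MvPolynomial.C s⁻¹ * MvPolynomial.C s : MvPolynomial (Fin 2) K) = 1 := by
        rw [← MvPolynomial.C_mul, inv_mul_cancel₀ hs, MvPolynomial.C_1]
      ext i : 1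
      fin_cases i
      · simp [MvPolynomial.algHom_C, MvPolynomial.algebraMap_eq, ← mul_assoc, h]
      · simp [MvPolynomial.algHom_C, MvPolynomial.algebraMap_eq]
        linear_combination -MvPolynomial.C t * MvPolynomial.X 0 * h)
    (by
      have h : (MvPolynomial.C s⁻¹ * MvPolynomial.C s : MvPolynomial (Fin 2) K) = 1 := by
        rw [← MvPolynomial.C_mul, inv_mul_cancel₀ hs, MvPolynomial.C_1]
      ext i : 1
      fin_cases i
      · simp [MvPolynomial.algHom_C, MvPolynomial.algebraMap_eq]
        linear_combination MvPolynomial.X 0 * h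
      · simp [MvPolynomial.algHom_C, MvPolynomial.algebraMap_eq]
        ring)

lemma eval_shear (s t : K) (hs : s ≠ 0) (q : MvPolynomial (Fin 2) K) :
    MvPolynomial.eval ![1, 0] (shear s t hs q) = MvPolynomial.eval ![s, t] q := by
  induction q using MvPolynomial.induction_on with
  | C c => simp [shear, MvPolynomial.algebraMap_eq]
  | add p q hp hq => simp only [map_add, hp, hq]
  | mul_X p i hp =>
    simp only [map_mul, hp]
    fin_cases i <;> simp [shear]

lemma isHomogeneous_linear (u v : K) : (MvPolynomial.C u * MvPolynomial.X 0 +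
    MvPolynomial.C v * MvPolynomial.X 1 : MvPolynomial (Fin 2) K).IsHomogeneous 1 :=
  (MvPolynomial.isHomogeneous_C_mul_X _ _).add (MvPolynomial.isHomogeneous_C_mul_X _ _)

lemma isHomogeneous_shear (s t : K) (hs : s ≠ 0) {q : MvPolynomial (Fin 2) K} {n : ℕ}
    (hq : q.IsHomogeneous n) : (shear s t hs q).IsHomogeneous n := by
  rw [← one_mul n]
  refine hq.aeval _ fun i ↦ ?_
  fin_cases i
  · simpa using isHomogeneous_linear s 0
  · simpa using isHomogeneous_linear t 1

lemma isHomogeneous_shear_symm (s t : K) (hs : s ≠ 0) {q : MvPolynomial (Fin 2) K} {n : ℕ}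
    (hq : q.IsHomogeneous n) : ((shear s t hs).symm q).IsHomogeneous n := by
  rw [← one_mul n]
  refine hq.aeval _ fun i ↦ ?_
  fin_cases i
  · simpa using isHomogeneous_linear s⁻¹ 0
  · simpa using isHomogeneous_linear (-(t * s⁻¹)) 1

lemma isRelPrime_map_equiv (e : MvPolynomial (Fin 2) K ≃ₐ[K] MvPolynomial (Fin 2) K)
    {x y : MvPolynomial (Fin 2) K} (h : IsRelPrime x y) : IsRelPrime (e x) (e y) := by
  intro d hx hy
  have hx' := map_dvd e.symm hx
  have hy' := map_dvd e.symm hy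
  rw [e.symm_apply_apply] at hx' hy'
  simpa using (h hx' hy').map e

end Helpers

/-- Let `k` be an algebraically closed field, `[λᵢ : μᵢ]` pairwise distinct points of
`ℙ¹(k)`, and `gᵢ` nonzero, pairwise coprime binary forms of degrees `kᵢ`.  If
`Σkᵢ ≤ a`, then there exist binary forms `A, B` of degree `a` with `gcd (A, B)` a
nonzero constant such that `gᵢ ∣ λᵢA + μᵢB` for every `i`. -/
theorem exists_coprime_pair_of_incidence (K : Type) [Field K] [IsAlgClosed K]
    (r : ℕ) (hr : 1 ≤ r) (lam mu : Fin r → K)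
    (hpts : ∀ i, (lam i, mu i) ≠ (0, 0))
    (hdist : ∀ i j, i ≠ j → lam i * mu j ≠ lam j * mu i)
    (g : Fin r → BForm K) (hg0 : ∀ i, g i ≠ 0) (k : Fin r → ℕ)
    (hgdeg : ∀ i, MvPolynomial.IsHomogeneous (g i) (k i))
    (hcop : ∀ i j, i ≠ j → ∀ d : BForm K, d ∣ g i → d ∣ g j → IsUnit d)
    (a : ℕ) (ha : ∑ i, k i ≤ a) :
    ∃ A B : BForm K, MvPolynomial.IsHomogeneous A a ∧ MvPolynomial.IsHomogeneous B a ∧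
      (∀ d : BForm K, d ∣ A → d ∣ B → IsUnit d) ∧
      ∀ i, g i ∣ (MvPolynomial.C (lam i) * A + MvPolynomial.C (mu i) * B) := by
  -- The factor `X 0` forces the first coordinate of the chosen point to be nonzero.
  have hprod : (MvPolynomial.X 0 * ∏ i, g i : BForm K) ≠ 0 :=
    mul_ne_zero (MvPolynomial.X_ne_zero _) (Finset.prod_ne_zero_iff.2 fun i _ ↦ hg0 i)
  obtain ⟨x, hx⟩ : ∃ x, MvPolynomial.eval x (MvPolynomial.X 0 * ∏ i, g i : BForm K) ≠ 0 := by
    by_contra! h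
    exact hprod (MvPolynomial.funext fun x ↦ by rw [h x, map_zero])
  rw [map_mul, MvPolynomial.eval_X, map_prod] at hx
  have hs : x 0 ≠ 0 := left_ne_zero_of_mul hx
  have hgx : ∀ i, MvPolynomial.eval x (g i) ≠ 0 := fun i ↦
    Finset.prod_ne_zero_iff.1 (right_ne_zero_of_mul hx) i (Finset.mem_univ i)
  have hx2 : ![x 0, x 1] = x := by
    ext i
    fin_cases i <;> rfl
  set e := shear (x 0) (x 1) hs with he
  obtain ⟨A, B, hA, hB, hAB, hdvd⟩ := exists_coprime_pair_of_eval_ne_zero lam mu hpts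
    (fun i ↦ e (g i)) (fun i ↦ by rw [he, eval_shear, hx2]; exact hgx i) k
    (fun i ↦ isHomogeneous_shear _ _ hs (hgdeg i))
    (fun i j hij ↦ isRelPrime_map_equiv e fun d hi hj ↦ hcop i j hij d hi hj) a ha
  refine ⟨e.symm A, e.symm B, isHomogeneous_shear_symm _ _ hs hA,
    isHomogeneous_shear_symm _ _ hs hB,
    fun d hdA hdB ↦ isRelPrime_map_equiv e.symm hAB hdA hdB, fun i ↦ ?_⟩
  have h := map_dvd e.symm (hdvd i)
  have hC : ∀ c : K, e.symm (MvPolynomial.C c) = MvPolynomial.C c := fun c ↦ e.symm.commutes c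
  simpa only [map_add, map_mul, hC, AlgEquiv.symm_apply_apply] using h

end
end

section
/- With the notation of the counting model: if 2a ≥ k₁+⋯+k_r and 2a′ ≥ k₁+⋯+k_r, then #M̃(a,a′,𝐤) ≤ (q−1)² · q^{h+2} · (1−q^{−1})^{−(r+2)}, where h = 2a+2a′−(k₁+⋯+k_r). Equivalently, the number of 𝔽_q-rational curves ℙ¹ → S of the corresponding nef class α on the blow-up S is at most q^{h+2}/(1−q^{−1})^{r+2}. -/
/-!
A gcd `g i` of `s₁ - c i s₂` and `t₁ - c' i t₂` is fixed first for every `i`. Up to scalars there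
are at most `q ^ (k i) / (1 - q⁻¹)` nonzero forms of degree `k i`, so it remains to see that, for
given `g`, there are at most `q ^ (2 a - ∑ k i + 2)` coprime pairs `(s₁, s₂)` with
`g i ∣ s₁ - c i s₂` for all `i`, and likewise for `(t₁, t₂)`.

If there is one such coprime pair `s`, the `g i` are pairwise coprime, because `c` is injective.
For any other pair `x` the determinant `s₁ x₂ - s₂ x₁` is a form of degree `2 a` divisible by
`∏ g i`, so it takes at most `q ^ (2 a - ∑ k i + 1)` values. Pairs with the same determinant
differ by a constant multiple of `s`, as `s` is coprime. This is
`MtildeBound.ncard_coprimePairs_le`; `MtildeBound.ncard_mul_le` does the double counting, where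
instead of normalizing the gcds all their `(q - 1) ^ r` rescalings are counted.
-/

open scoped BigOperators
open Filter

noncomputable section

/-- The counting set `M̃(a, a', 𝐤)`: quadruples `(s₁, s₂, t₁, t₂)` of binary forms with
`s₁, s₂` homogeneous of degree `a` and `t₁, t₂` homogeneous of degree `a'`, such that
`gcd (s₁, s₂)` and `gcd (t₁, t₂)` are nonzero constants and, for each `i`, the nonzero
forms `s₁ − cᵢ s₂` and `t₁ − cᵢ′ t₂` have a gcd which is homogeneous of degree exactly
`kᵢ`. -/
def MtildeSet (K : Type) [Field K] (r : ℕ) (c c' : Fin r → K) (a a' : ℕ)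
    (k : Fin r → ℕ) : Set (BForm K × BForm K × BForm K × BForm K) :=
  {x | MvPolynomial.IsHomogeneous x.1 a ∧ MvPolynomial.IsHomogeneous x.2.1 a ∧
       MvPolynomial.IsHomogeneous x.2.2.1 a' ∧ MvPolynomial.IsHomogeneous x.2.2.2 a' ∧
       (∀ d : BForm K, d ∣ x.1 → d ∣ x.2.1 → IsUnit d) ∧
       (∀ d : BForm K, d ∣ x.2.2.1 → d ∣ x.2.2.2 → IsUnit d) ∧
       ∀ i : Fin r,
         x.1 - MvPolynomial.C (c i) * x.2.1 ≠ 0 ∧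
         x.2.2.1 - MvPolynomial.C (c' i) * x.2.2.2 ≠ 0 ∧
         ∃ g : BForm K, MvPolynomial.IsHomogeneous g (k i) ∧
           (g ∣ x.1 - MvPolynomial.C (c i) * x.2.1) ∧
           (g ∣ x.2.2.1 - MvPolynomial.C (c' i) * x.2.2.2) ∧
           ∀ d : BForm K, d ∣ x.1 - MvPolynomial.C (c i) * x.2.1 →
             d ∣ x.2.2.1 - MvPolynomial.C (c' i) * x.2.2.2 → d ∣ g}

namespace MtildeBound

open MvPolynomial

variable {K : Type} [Field K]

/-- A quotient of binary forms that exists in the polynomial ring is again a form. -/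
theorem exists_form_quotient {G y : BForm K} {m d : ℕ} (hG : G.IsHomogeneous m)
    (hy : y.IsHomogeneous (m + d)) (h : G ∣ y) :
    ∃ z : BForm K, z.IsHomogeneous d ∧ y = G * z := by
  obtain ⟨z, rfl⟩ := h
  let A : ℕ → Submodule K (BForm K) := homogeneousSubmodule (Fin 2) K
  let _ : GradedAlgebra A := gradedAlgebra
  refine ⟨(DirectSum.decompose A z d : BForm K), (DirectSum.decompose A z d).2, ?_⟩
  rw [← DirectSum.coe_decompose_mul_add_of_left_mem A (show G ∈ A m from hG)]
  exact (DirectSum.decompose_of_mem_same A (show G * z ∈ A (m + d) from hy)).symm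

/-- A binary form of degree `n` is determined by its `n + 1` coefficients. -/
theorem coeff_injOn (n : ℕ) :
    Set.InjOn (fun (p : BForm K) (i : Fin (n + 1)) =>
      p.coeff (Finsupp.single 0 (i : ℕ) + Finsupp.single 1 (n - i)))
      {p | p.IsHomogeneous n} := by
  intro p hp p' hp' h
  ext e
  by_cases he : e.degree = n
  · have hn : e 0 + e 1 = n := by
      rw [← he, Finsupp.degree_eq_sum, Fin.sum_univ_two]
    have h' := congrFun h ⟨e 0, by omega⟩
    have hee : Finsupp.single 0 (e 0) + Finsupp.single 1 (n - e 0) = e := by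
      ext j
      fin_cases j
      · simp
      · simp; omega
    simpa only [hee] using h'
  · rw [IsHomogeneous.coeff_eq_zero hp he, IsHomogeneous.coeff_eq_zero hp' he]

theorem finite_forms [Finite K] (n : ℕ) : {p : BForm K | p.IsHomogeneous n}.Finite :=
  Set.Finite.of_injOn (Set.mapsTo_univ _ _) (coeff_injOn n) Set.finite_univ

theorem ncard_forms_le [Fintype K] (n : ℕ) :
    {p : BForm K | p.IsHomogeneous n}.ncard ≤ Fintype.card K ^ (n + 1) := by
  refine (Set.ncard_le_ncard_of_injOn _ (fun _ _ => Set.mem_univ _)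
    (coeff_injOn n) Set.finite_univ).trans ?_
  simp [Set.ncard_univ]

/-- If a pair of forms is proportional, over the function field, to a coprime pair of the same
degree, then it is a constant multiple of that pair. -/
theorem exists_scalar {n : ℕ} {s₁ s₂ x₁ x₂ : BForm K} (hs₁ : s₁.IsHomogeneous n)
    (hs₂ : s₂.IsHomogeneous n) (hx₁ : x₁.IsHomogeneous n) (hx₂ : x₂.IsHomogeneous n)
    (hrel : IsRelPrime s₁ s₂) (h : s₁ * x₂ = s₂ * x₁) :
    ∃ l : K, x₁ = C l * s₁ ∧ x₂ = C l * s₂ := by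
  wlog h0 : s₁ ≠ 0 generalizing s₁ s₂ x₁ x₂
  · have h2 : s₂ ≠ 0 := by
      rintro rfl
      rw [not_not.mp h0] at hrel
      exact not_isUnit_zero (hrel dvd_rfl dvd_rfl)
    obtain ⟨l, h1, h2⟩ := this hs₂ hs₁ hx₂ hx₁ hrel.symm h.symm h2
    exact ⟨l, h2, h1⟩
  have hd : s₁ ∣ x₁ := hrel.dvd_of_dvd_mul_left (h ▸ dvd_mul_right s₁ x₂)
  obtain ⟨z, hz, rfl⟩ := exists_form_quotient (d := 0) hs₁ hx₁ hd
  have hzC := (totalDegree_eq_zero_iff_eq_C).mp (Nat.le_zero.mp hz.totalDegree_le)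
  refine ⟨coeff 0 z, ?_, ?_⟩
  · rw [← hzC, mul_comm]
  · rw [← hzC]
    apply mul_left_cancel₀ h0
    rw [h]; ring

/-- The coprime pairs `(s₁, s₂)` of forms of degree `n` such that `g i ∣ s₁ - c i * s₂` for
every `i`. -/
def coprimePairs {r : ℕ} (c : Fin r → K) (n : ℕ) (g : Fin r → BForm K) :
    Set (BForm K × BForm K) :=
  {p | p.1.IsHomogeneous n ∧ p.2.IsHomogeneous n ∧ IsRelPrime p.1 p.2 ∧
    ∀ i, g i ∣ p.1 - C (c i) * p.2}

theorem finite_coprimePairs [Finite K] {r : ℕ} (c : Fin r → K) (n : ℕ) (g : Fin r → BForm K) :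
    (coprimePairs c n g).Finite :=
  ((finite_forms n).prod (finite_forms n)).subset fun _ hp => ⟨hp.1, hp.2.1⟩

/-- The existence of one coprime pair `s` forces the `g i` to be pairwise coprime, so that for
every other pair `x` the determinant `s₁ x₂ - s₂ x₁` is divisible by their product. The
determinant thus takes at most `q ^ (2 n - ∑ k i + 1)` values, and each value is taken on a
translate of the line spanned by `s`. -/
theorem ncard_coprimePairs_le [Fintype K] {r : ℕ} {c : Fin r → K} (hc : Function.Injective c)
    {n : ℕ} {g : Fin r → BForm K} {k : Fin r → ℕ} (hg : ∀ i, (g i).IsHomogeneous (k i))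
    (hk : ∑ i, k i ≤ 2 * n) :
    (coprimePairs c n g).ncard ≤ Fintype.card K ^ (2 * n - ∑ i, k i + 2) := by
  classical
  rcases (coprimePairs c n g).eq_empty_or_nonempty with he | ⟨s, hs₁, hs₂, hrel, hs⟩
  · simp [he]
  set d := 2 * n - ∑ i, k i with hd
  let D : BForm K × BForm K → BForm K := fun x => s.1 * x.2 - s.2 * x.1
  have hcop : Pairwise (Function.onFun IsRelPrime g) := by
    intro i j hij e hei hej
    have hu : IsUnit (C (c j - c i) : BForm K) :=
      (isUnit_iff_ne_zero.mpr (sub_ne_zero.mpr (hc.ne hij.symm))).map C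
    have h1 := hei.trans (hs i)
    have h2 := hej.trans (hs j)
    have h3 : e ∣ s.2 := by
      refine (hu.dvd_mul_left).mp ?_
      convert dvd_sub h1 h2 using 1
      rw [C_sub]; ring
    refine hrel ?_ h3
    convert dvd_add h1 (h3.mul_left (C (c i))) using 1
    ring
  have hG : (∏ i, g i).IsHomogeneous (∑ i, k i) := IsHomogeneous.prod _ _ _ fun i _ => hg i
  have himg : D '' coprimePairs c n g ⊆
      (fun z => (∏ i, g i) * z) '' {z : BForm K | z.IsHomogeneous d} := by
    rintro _ ⟨x, ⟨hx₁, hx₂, -, hx⟩, rfl⟩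
    have hdvd : (∏ i, g i) ∣ D x := by
      refine Fintype.prod_dvd_of_isRelPrime hcop fun i => ?_
      convert dvd_sub ((hs i).mul_right x.2) ((hx i).mul_left s.2) using 1
      simp only [D]; ring
    have hD : (D x).IsHomogeneous (∑ i, k i + d) := by
      rw [hd, Nat.add_sub_cancel' hk, two_mul]
      exact (hs₁.mul hx₂).sub (hs₂.mul hx₁)
    obtain ⟨z, hz, h⟩ := exists_form_quotient hG hD hdvd
    exact ⟨z, hz, h.symm⟩
  have hfin := finite_coprimePairs c n g
  rw [Set.ncard_eq_toFinset_card _ hfin]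
  -- Each fibre of the determinant is contained in a translate of the line `K • s`.
  have hfib : ∀ b ∈ hfin.toFinset.image D,
      (hfin.toFinset.filter fun x => D x = b).card ≤ Fintype.card K := by
    intro b hb
    obtain ⟨y, hy, rfl⟩ := Finset.mem_image.mp hb
    have hy' := hfin.mem_toFinset.mp hy
    refine (Finset.card_le_card (t := Finset.univ.image fun l : K =>
      (y.1 + C l * s.1, y.2 + C l * s.2)) ?_).trans Finset.card_image_le
    intro x hx
    obtain ⟨hx, hxy⟩ := Finset.mem_filter.mp hx
    have hx' := hfin.mem_toFinset.mp hx
    obtain ⟨l, h1, h2⟩ := exists_scalar hs₁ hs₂ (hx'.1.sub hy'.1) (hx'.2.1.sub hy'.2.1) hrel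
      (by simp only [D] at hxy; linear_combination hxy)
    refine Finset.mem_image.mpr ⟨l, Finset.mem_univ _, ?_⟩
    rw [← h1, ← h2]
    ext1 <;> ring
  have hcard : (hfin.toFinset.image D).card ≤ Fintype.card K ^ (d + 1) := by
    rw [← Set.ncard_coe_finset, Finset.coe_image, hfin.coe_toFinset]
    exact (Set.ncard_le_ncard himg ((finite_forms d).image _)).trans
      ((Set.ncard_image_le (finite_forms d)).trans (ncard_forms_le d))
  calc _ ≤ Fintype.card K * (hfin.toFinset.image D).card :=
        Finset.card_le_mul_card_image _ _ hfib
    _ ≤ Fintype.card K * Fintype.card K ^ (d + 1) := Nat.mul_le_mul_left _ hcard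
    _ = _ := by ring

/-- Double counting of the quadruples together with a choice of their `r` gcds: each quadruple
admits at least `(q - 1) ^ r` choices, and a given choice `g` occurs with at most
`#coprimePairs c a g * #coprimePairs c' a' g` quadruples. -/
theorem ncard_mul_le [Fintype K] {r : ℕ} {c c' : Fin r → K}
    (hc : Function.Injective c) (hc' : Function.Injective c') {a a' : ℕ} {k : Fin r → ℕ}
    (h1 : ∑ i, k i ≤ 2 * a) (h2 : ∑ i, k i ≤ 2 * a') :
    (MtildeSet K r c c' a a' k).ncard * (Fintype.card K - 1) ^ r ≤
      Fintype.card K ^ (∑ i, k i + r) *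
        (Fintype.card K ^ (2 * a - ∑ i, k i + 2) * Fintype.card K ^ (2 * a' - ∑ i, k i + 2)) := by
  classical
  have hMfin : (MtildeSet K r c c' a a' k).Finite := by
    refine ((finite_forms a).prod ((finite_forms a).prod
      ((finite_forms a').prod (finite_forms a')))).subset ?_
    rintro x ⟨hx1, hx2, hx3, hx4, -⟩
    exact ⟨hx1, hx2, hx3, hx4⟩
  have hex : ∀ x : BForm K × BForm K × BForm K × BForm K, ∃ g : Fin r → BForm K,
      x ∈ MtildeSet K r c c' a a' k → ∀ i, (g i).IsHomogeneous (k i) ∧ g i ≠ 0 ∧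
        g i ∣ x.1 - C (c i) * x.2.1 ∧ g i ∣ x.2.2.1 - C (c' i) * x.2.2.2 := by
    intro x
    by_cases hx : x ∈ MtildeSet K r c c' a a' k
    · choose hne hne' g hg hg1 hg2 hg3 using hx.2.2.2.2.2.2
      exact ⟨g, fun _ i => ⟨hg i, ne_zero_of_dvd_ne_zero (hne i) (hg1 i), hg1 i, hg2 i⟩⟩
    · exact ⟨0, fun h => absurd h hx⟩
  choose γ hγ using hex
  let T : Finset (Fin r → BForm K) := Fintype.piFinset fun i => (finite_forms (k i)).toFinset
  let P : (Fin r → BForm K) → Finset ((BForm K × BForm K) × (BForm K × BForm K)) := fun g =>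
    (finite_coprimePairs c a g).toFinset ×ˢ (finite_coprimePairs c' a' g).toFinset
  have hTcard : T.card ≤ Fintype.card K ^ (∑ i, k i + r) := by
    rw [Fintype.card_piFinset]
    calc _ ≤ ∏ i, Fintype.card K ^ (k i + 1) := Finset.prod_le_prod' fun i _ => by
            rw [← Set.ncard_eq_toFinset_card _ (finite_forms (k i))]; exact ncard_forms_le (k i)
      _ = _ := by rw [Finset.prod_pow_eq_pow_sum, Finset.sum_add_distrib]; simp
  have hPcard : ∀ g ∈ T, (P g).card ≤
      Fintype.card K ^ (2 * a - ∑ i, k i + 2) * Fintype.card K ^ (2 * a' - ∑ i, k i + 2) := by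
    intro g hg
    have hg' : ∀ i, (g i).IsHomogeneous (k i) := fun i =>
      (finite_forms (k i)).mem_toFinset.mp (Fintype.mem_piFinset.mp hg i)
    rw [Finset.card_product, ← Set.ncard_eq_toFinset_card _ (finite_coprimePairs c a g),
      ← Set.ncard_eq_toFinset_card _ (finite_coprimePairs c' a' g)]
    exact Nat.mul_le_mul (ncard_coprimePairs_le hc hg' h1) (ncard_coprimePairs_le hc' hg' h2)
  have hinj : (hMfin.toFinset ×ˢ (Finset.univ : Finset (Fin r → Kˣ))).card ≤
      (T.sigma P).card := by
    refine Finset.card_le_card_of_injOn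
      (fun y => ⟨fun i => C (y.2 i : K) * γ y.1 i, (y.1.1, y.1.2.1), y.1.2.2⟩) ?_ ?_
    · rintro ⟨x, l⟩ hy
      have hx : x ∈ MtildeSet K r c c' a a' k := by simpa using hy
      have hu : ∀ i, IsUnit (C (l i : K) : BForm K) := fun i => (l i).isUnit.map C
      have hx' := hx
      obtain ⟨hx1, hx2, hx3, hx4, hx5, hx6, -⟩ := hx'
      have hγx := hγ x hx
      simp only [Finset.coe_sigma, Set.mem_sigma_iff, Finset.mem_coe, T, P, Fintype.mem_piFinset,
        Finset.mem_product, Set.Finite.mem_toFinset]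
      refine ⟨fun i => (hγx i).1.C_mul _, ⟨hx1, hx2, fun d => hx5 d, fun i => ?_⟩,
        ⟨hx3, hx4, fun d => hx6 d, fun i => ?_⟩⟩
      · exact (hu i).mul_left_dvd.mpr (hγx i).2.2.1
      · exact (hu i).mul_left_dvd.mpr (hγx i).2.2.2
    · rintro ⟨x, l⟩ hy ⟨x', l'⟩ - h
      have hx : x ∈ MtildeSet K r c c' a a' k := by simpa using hy
      rw [Sigma.mk.injEq, heq_eq_eq] at h
      obtain ⟨hl, hxx⟩ := h
      obtain rfl : x = x' := by
        simp only [Prod.mk.injEq] at hxx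
        ext1
        · exact hxx.1.1
        · ext1
          · exact hxx.1.2
          · exact hxx.2
      congr 1
      funext i
      exact Units.ext (C_injective _ _ (mul_right_cancel₀ (hγ x hx i).2.1 (congrFun hl i)))
  calc _ = (hMfin.toFinset ×ˢ (Finset.univ : Finset (Fin r → Kˣ))).card := by
        rw [Finset.card_product, Set.ncard_eq_toFinset_card _ hMfin]
        simp [Fintype.card_units]
    _ ≤ _ := hinj
    _ = ∑ g ∈ T, (P g).card := Finset.card_sigma _ _
    _ ≤ _ := (Finset.sum_le_card_nsmul _ _ _ hPcard).trans
        (by rw [smul_eq_mul]; exact Nat.mul_le_mul_right _ hTcard)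

end MtildeBound

/-- If `2a ≥ k₁ + ⋯ + k_r` and `2a′ ≥ k₁ + ⋯ + k_r`, then
`#M̃(a, a′, 𝐤) ≤ (q−1)² q^{h+2} (1−q^{−1})^{−(r+2)}` where
`h = 2a + 2a′ − (k₁ + ⋯ + k_r)`. -/
theorem card_Mtilde_upper_bound (K : Type) [Field K] [Fintype K]
    (r : ℕ) (hr : 1 ≤ r) (c c' : Fin r → K)
    (hc : Function.Injective c) (hc' : Function.Injective c')
    (a a' : ℕ) (ha : 1 ≤ a) (ha' : 1 ≤ a') (k : Fin r → ℕ)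
    (h1 : ∑ i, k i ≤ 2 * a) (h2 : ∑ i, k i ≤ 2 * a') :
    ((MtildeSet K r c c' a a' k).ncard : ℝ) ≤
      ((Fintype.card K : ℝ) - 1) ^ 2 *
        (Fintype.card K : ℝ) ^ (2 * a + 2 * a' - ∑ i, k i + 2) *
        ((1 - (Fintype.card K : ℝ)⁻¹) ^ (r + 2))⁻¹ := by
  set q := Fintype.card K with hq
  have hq1 : 1 < q := Fintype.one_lt_card
  have key := MtildeBound.ncard_mul_le hc hc' h1 h2
  rw [← hq] at key
  obtain ⟨d, hd⟩ := Nat.exists_eq_add_of_le h1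
  obtain ⟨d', hd'⟩ := Nat.exists_eq_add_of_le h2
  have e1 : 2 * a - ∑ i, k i = d := by omega
  have e2 : 2 * a' - ∑ i, k i = d' := by omega
  have e3 : 2 * a + 2 * a' - ∑ i, k i = ∑ i, k i + d + d' := by omega
  rw [e1, e2] at key
  rw [e3]
  have hqR : (1 : ℝ) < q := by exact_mod_cast hq1
  have hpos : (0 : ℝ) < (q : ℝ) - 1 := by linarith
  have hq0 : (q : ℝ) ≠ 0 := by positivity
  have key' : ((MtildeSet K r c c' a a' k).ncard : ℝ) * ((q : ℝ) - 1) ^ r ≤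
      (q : ℝ) ^ (∑ i, k i + r) * ((q : ℝ) ^ (d + 2) * (q : ℝ) ^ (d' + 2)) := by
    have := (Nat.cast_le (α := ℝ)).mpr key
    push_cast [Nat.cast_sub hq1.le] at this
    exact this
  have hinv : (1 - (q : ℝ)⁻¹) = ((q : ℝ) - 1) / q := by field_simp
  rw [hinv, div_pow, inv_div, ← mul_div_assoc, le_div_iff₀ (pow_pos hpos _)]
  -- Both bounds equal `q ^ (h + 4) / (1 - q⁻¹) ^ r`, since `(q - 1) ^ 2 = q ^ 2 (1 - q⁻¹) ^ 2`.
  calc _ = ((MtildeSet K r c c' a a' k).ncard * ((q : ℝ) - 1) ^ r) * ((q : ℝ) - 1) ^ 2 := by ring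
    _ ≤ _ := mul_le_mul_of_nonneg_right key' (by positivity)
    _ = _ := by ring
end
end

section
/- For every integer r ≥ 1 there exists δ > 0, depending only on r and not on q, such that for every prime power q the infinite product ∏_c [ Λ_c(t₁,…,t_r) · ∏_{i=1}^r (1 − (t_i/q)^{|c|}) ], taken over all closed points c of ℙ¹ over 𝔽_q, converges absolutely for all complex t₁,…,t_r with |t_i| ≤ q^δ for each i. In particular, the product ∏_c Λ_c(t₁,…,t_r) converges absolutely for all complex t₁,…,t_r with |t_i| < 1. -/
/-!
Only the growth of the local terms in the degree `n = |c|` matters. The monic polynomials of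
degree `n` inject into `Fin n → K`, so there are at most `q ^ n` points of degree `n` other than
`∞`, and `∑_c f |c|` converges as soon as `∑_n q ^ n * |f n|` does (`summable_cpDeg`).

Take `δ = 1/4` and put `Q = q⁻ⁿ`, `xᵢ = (tᵢ/q)ⁿ`, `ρ = q ^ δ / q`, so that `Q` and all the `xᵢ`
are `O(ρⁿ)`. With `S = ∑ xᵢ`,
`Λ = 1 + S + O(ρ²ⁿ)` and `∏ (1 - xᵢ) = 1 - S + O(ρ²ⁿ)`, and the first-order terms cancel in the
product, leaving `1 + O(ρ²ⁿ)` (`lam_mul_prod_isBigO`). Since `q ρ² = q ^ (-1/2) < 1`, the sum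
converges.

On the open polydisc one has directly `Λ - 1 = O(Q² + ∑ |xᵢ|) = O((τ/q)ⁿ)` for some `τ < 1`
(`lam_sub_one_isBigO`), and `∑ qⁿ (τ/q)ⁿ` converges.
-/

open scoped BigOperators
open Filter

noncomputable section

/-- Closed points of ℙ¹ over a field: monic irreducible polynomials together with the
point at infinity. -/
def ClosedPoint (K : Type) [Field K] : Type :=
  {p : Polynomial K // p.Monic ∧ Irreducible p} ⊕ Unit

/-- The degree `|c|` of a closed point. -/
def cpDeg {K : Type} [Field K] : ClosedPoint K → ℕ
  | Sum.inl p => p.1.natDegree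
  | Sum.inr _ => 1

/-- The local factor `Λ_c` of the virtual height zeta function at a closed point of
degree `n` (complex version). -/
def Lam (q r n : ℕ) (t : Fin r → ℂ) : ℂ :=
  1 - (r + 2 : ℂ) * ((q : ℂ) ^ (2 * n))⁻¹ + 2 * (r : ℂ) * ((q : ℂ) ^ (3 * n))⁻¹
    - ((r : ℂ) - 1) * ((q : ℂ) ^ (4 * n))⁻¹
    + (1 - 2 * ((q : ℂ) ^ n)⁻¹ + 2 * ((q : ℂ) ^ (3 * n))⁻¹ - ((q : ℂ) ^ (4 * n))⁻¹) *
      ∑ i : Fin r, ((t i / (q : ℂ)) ^ n / (1 - (t i / (q : ℂ)) ^ n))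

open Asymptotics Topology

/-- A monic polynomial is determined by its degree and its lower coefficients. -/
lemma monic_coeff_injective (K : Type) [Field K] :
    Function.Injective (fun p : {p : Polynomial K // p.Monic ∧ Irreducible p} =>
      (⟨p.1.natDegree, fun i => p.1.coeff i⟩ : Σ n : ℕ, (Fin n → K))) := by
  rintro ⟨p, hp, hp'⟩ ⟨s, hs, hs'⟩ h
  simp only [Sigma.mk.injEq] at h
  obtain ⟨h1, h2⟩ := h
  apply Subtype.ext
  have key : ∀ i (hi : i < p.natDegree), p.coeff i = s.coeff i := by
    intro i hi
    have h3 : ∀ (m : ℕ) (hm : p.natDegree = m)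
        (h : HEq (fun i : Fin p.natDegree => p.coeff i) (fun i : Fin m => s.coeff i)),
        p.coeff i = s.coeff i := by
      intro m hm h
      subst hm
      exact congrFun (eq_of_heq h) ⟨i, hi⟩
    exact h3 _ h1 h2
  ext i
  rcases lt_trichotomy i p.natDegree with hi | hi | hi
  · exact key i hi
  · have e1 : p.coeff i = 1 := by rw [hi]; exact hp
    have e2 : s.coeff i = 1 := by rw [hi, h1]; exact hs
    rw [e1, e2]
  · rw [Polynomial.coeff_eq_zero_of_natDegree_lt hi,
      Polynomial.coeff_eq_zero_of_natDegree_lt (h1 ▸ hi)]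

/-- There are at most `q ^ n` monic irreducible polynomials of degree `n`, and the point `∞` adds
a single term. -/
lemma summable_cpDeg (K : Type) [Field K] [Fintype K] (f : ℕ → ℝ) (hf : ∀ n, 0 ≤ f n)
    (h : Summable (fun n => (Fintype.card K : ℝ) ^ n * f n)) :
    Summable (fun cp : ClosedPoint K => f (cpDeg cp)) := by
  have hsig : Summable (fun a : Σ n : ℕ, (Fin n → K) => f a.1) := by
    rw [summable_sigma_of_nonneg (fun a => hf a.1)]
    refine ⟨fun n => Summable.of_finite, ?_⟩
    simpa [tsum_fintype] using h
  have hfin : Summable (fun p : {p : Polynomial K // p.Monic ∧ Irreducible p} =>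
      f p.1.natDegree) := hsig.comp_injective (monic_coeff_injective K)
  exact Summable.sum (f := fun cp : {p : Polynomial K // p.Monic ∧ Irreducible p} ⊕ Unit =>
    f (cpDeg (K := K) cp)) hfin Summable.of_finite

/-- Summation over closed points of a term that is `O(σ ^ n)` in the degree, with `q σ < 1`. -/
lemma summable_cpDeg_of_isBigO (K : Type) [Field K] [Fintype K] (g : ℕ → ℂ) (σ : ℝ)
    (hσ : 0 ≤ σ) (hq : Fintype.card K * σ < 1) (hg : g =O[atTop] (fun n => σ ^ n)) :
    Summable (fun cp : ClosedPoint K => ‖g (cpDeg cp)‖) := by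
  refine summable_cpDeg K (fun n => ‖g n‖) (fun n => norm_nonneg _) ?_
  refine summable_of_isBigO_nat
    (summable_geometric_of_lt_one (r := Fintype.card K * σ) (by positivity) hq) ?_
  simp only [mul_pow]
  exact (isBigO_refl _ _).mul hg.norm_left

/-- Expansion of `∏ (1 - xᵢ)` to first order in small quantities `xᵢ = O(Y)`. -/
lemma prod_one_sub_isBigO {ι : Type} (s : Finset ι) (x : ι → ℕ → ℂ) (Y : ℕ → ℝ)
    (hY : Y =O[atTop] (fun _ => (1 : ℝ))) (hx : ∀ i, x i =O[atTop] Y) :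
    (fun n => ∏ i ∈ s, (1 - x i n) - 1 + ∑ i ∈ s, x i n) =O[atTop] (fun n => Y n ^ 2) := by
  classical
  induction s using Finset.induction_on with
  | empty => simpa using isBigO_zero _ _
  | insert a s ha ih =>
    have hS : (fun n => ∑ i ∈ s, x i n) =O[atTop] Y := IsBigO.fun_sum fun i _ => hx i
    have hE : (fun n => Y n ^ 2) =O[atTop] Y := by
      simpa [pow_two] using hY.mul (isBigO_refl Y atTop)
    -- `(1 - x) P - 1 + x + S = E - x (E - S)` when `P = 1 - S + E`
    have h := (hx a).mul ((ih.trans hE).sub hS)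
    simp only [← pow_two] at h
    refine (ih.sub h).congr_left fun n => ?_
    rw [Finset.prod_insert ha, Finset.sum_insert ha]
    ring

section LocalFactor

variable {q r : ℕ} {t : Fin r → ℂ} {ρ : ℝ}

lemma inv_pow_isBigO {σ : ℝ} {k : ℕ} (hσ : ((q : ℝ) ^ k)⁻¹ ≤ σ) :
    (fun n => ((q : ℂ) ^ (k * n))⁻¹) =O[atTop] (fun n => σ ^ n) := by
  refine IsBigO.of_bound 1 (Eventually.of_forall fun n => ?_)
  have h0 : (0 : ℝ) ≤ ((q : ℝ) ^ k)⁻¹ := by positivity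
  rw [pow_mul, ← inv_pow, norm_pow, norm_pow, one_mul]
  gcongr
  simpa [abs_of_nonneg (h0.trans hσ)] using hσ

lemma div_pow_isBigO {a : ℂ} (ha : ‖a‖ ≤ ρ) :
    (fun n : ℕ => a ^ n) =O[atTop] (fun n => ρ ^ n) := by
  refine IsBigO.of_bound 1 (Eventually.of_forall fun n => ?_)
  rw [norm_pow, norm_pow, one_mul]
  gcongr
  exact ha.trans (le_abs_self _)

lemma inv_one_sub_pow_isBigO {a : ℂ} (ha : ‖a‖ < 1) :
    (fun n : ℕ => (1 - a ^ n)⁻¹) =O[atTop] (fun _ => (1 : ℝ)) := by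
  have h : Tendsto (fun n : ℕ => (1 - a ^ n)⁻¹) atTop (𝓝 (1 - 0)⁻¹) :=
    ((tendsto_const_nhds).sub (tendsto_pow_atTop_nhds_zero_of_norm_lt_one ha)).inv₀ (by simp)
  exact h.isBigO_one ℝ

/-- The part of `Λ` free of the `tᵢ` is `1 + O(q⁻²ⁿ)`. -/
lemma lam_const_isBigO {σ : ℝ} (hq : 1 ≤ q) (hσ : ((q : ℝ) ^ 2)⁻¹ ≤ σ) :
    (fun n => - (r + 2 : ℂ) * ((q : ℂ) ^ (2 * n))⁻¹ + 2 * (r : ℂ) * ((q : ℂ) ^ (3 * n))⁻¹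
    - ((r : ℂ) - 1) * ((q : ℂ) ^ (4 * n))⁻¹) =O[atTop] (fun n => σ ^ n) := by
  have hq' : (1 : ℝ) ≤ q := by exact_mod_cast hq
  have h : ∀ k, 2 ≤ k → ((q : ℝ) ^ k)⁻¹ ≤ σ := fun k hk =>
    le_trans (by gcongr) hσ
  exact (((inv_pow_isBigO (h 2 le_rfl)).const_mul_left _).add
    ((inv_pow_isBigO (h 3 (by norm_num))).const_mul_left _)).sub
    ((inv_pow_isBigO (h 4 (by norm_num))).const_mul_left _)

/-- The coefficient of `∑ xᵢ / (1 - xᵢ)` in `Λ` is `1 + O(q⁻ⁿ)`. -/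
lemma lam_coeff_isBigO {σ : ℝ} (hq : 1 ≤ q) (hσ : (q : ℝ)⁻¹ ≤ σ) :
    (fun n => - 2 * ((q : ℂ) ^ n)⁻¹ + 2 * ((q : ℂ) ^ (3 * n))⁻¹ - ((q : ℂ) ^ (4 * n))⁻¹)
      =O[atTop] (fun n => σ ^ n) := by
  have hq' : (1 : ℝ) ≤ q := by exact_mod_cast hq
  have h : ∀ k, 1 ≤ k → ((q : ℝ) ^ k)⁻¹ ≤ σ := fun k hk =>
    le_trans (by gcongr; exact le_self_pow₀ hq' (by omega)) hσ
  have h1 := inv_pow_isBigO (h 1 le_rfl)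
  simp only [one_mul] at h1
  exact ((h1.const_mul_left _).add
    ((inv_pow_isBigO (h 3 (by norm_num))).const_mul_left _)).sub
    (inv_pow_isBigO (h 4 (by norm_num)))

lemma sum_div_isBigO (ht : ∀ i, ‖t i / (q : ℂ)‖ ≤ ρ) (hρ : ρ < 1) :
    (fun n => ∑ i, ((t i / (q : ℂ)) ^ n / (1 - (t i / (q : ℂ)) ^ n))) =O[atTop]
      (fun n => ρ ^ n) := by
  refine IsBigO.fun_sum fun i _ => ?_
  simpa [div_eq_mul_inv] using
    (div_pow_isBigO (ht i)).mul (inv_one_sub_pow_isBigO ((ht i).trans_lt hρ))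

/-- The trivial bound on `Λ - 1`, enough on the open polydisc. -/
lemma lam_sub_one_isBigO {σ : ℝ} (hq : 1 ≤ q) (hσ : ((q : ℝ) ^ 2)⁻¹ ≤ σ) (hσ1 : σ < 1)
    (ht : ∀ i, ‖t i / (q : ℂ)‖ ≤ σ) :
    (fun n => Lam q r n t - 1) =O[atTop] (fun n => σ ^ n) := by
  have hB := (lam_coeff_isBigO (q := q) (σ := 1) hq
    (inv_le_one_of_one_le₀ (by exact_mod_cast hq)))
  simp only [one_pow] at hB
  have h1 : (fun _ : ℕ => (1 : ℂ)) =O[atTop] (fun _ : ℕ => (1 : ℝ)) :=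
    isBigO_const_const _ one_ne_zero _
  have h2 := (h1.add hB).mul (sum_div_isBigO ht hσ1)
  simp only [one_mul] at h2
  refine ((lam_const_isBigO (r := r) hq hσ).add h2).congr_left fun n => ?_
  unfold Lam
  ring

/-- The first-order terms of `Λ` and of `∏ (1 - xᵢ)` cancel, so the corrected local factor is
`1` up to an error quadratic in `ρ ^ n`. -/
lemma lam_mul_prod_isBigO (hq : 1 ≤ q) (hρq : (q : ℝ)⁻¹ ≤ ρ) (hρ1 : ρ < 1)
    (ht : ∀ i, ‖t i / (q : ℂ)‖ ≤ ρ) :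
    (fun n => Lam q r n t * ∏ i, (1 - (t i / (q : ℂ)) ^ n) - 1) =O[atTop]
      (fun n => (ρ ^ 2) ^ n) := by
  have hρ0 : 0 ≤ ρ := le_trans (by positivity) hρq
  have hY : (fun n : ℕ => ρ ^ n) =O[atTop] (fun _ => (1 : ℝ)) :=
    (tendsto_pow_atTop_nhds_zero_of_lt_one hρ0 hρ1).isBigO_one ℝ
  have hsq : (fun n : ℕ => (ρ ^ 2) ^ n) = fun n => ρ ^ n * ρ ^ n := by
    ext n; ring
  have hx : ∀ i, (fun n : ℕ => (t i / (q : ℂ)) ^ n) =O[atTop] (fun n => ρ ^ n) :=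
    fun i => div_pow_isBigO (ht i)
  have hS : (fun n : ℕ => ∑ i, (t i / (q : ℂ)) ^ n) =O[atTop] (fun n => ρ ^ n) :=
    IsBigO.fun_sum fun i _ => hx i
  have hE1 : (fun n : ℕ => ∏ i, (1 - (t i / (q : ℂ)) ^ n) - 1 + ∑ i, (t i / (q : ℂ)) ^ n)
      =O[atTop] (fun n => (ρ ^ 2) ^ n) := by
    have := prod_one_sub_isBigO Finset.univ (fun i n => (t i / (q : ℂ)) ^ n) _ hY hx
    refine this.congr_right fun n => ?_
    ring
  -- `x / (1 - x) - x = x * x / (1 - x)`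
  have hE2 : (fun n : ℕ => ∑ i, (t i / (q : ℂ)) ^ n *
      ((t i / (q : ℂ)) ^ n * (1 - (t i / (q : ℂ)) ^ n)⁻¹)) =O[atTop]
      (fun n => (ρ ^ 2) ^ n) := by
    rw [hsq]
    refine IsBigO.fun_sum fun i _ => ?_
    simpa using (hx i).mul
      ((hx i).mul (inv_one_sub_pow_isBigO ((ht i).trans_lt hρ1)))
  have hE3 := lam_const_isBigO (r := r) (σ := ρ ^ 2) hq
    (by rw [← inv_pow]; gcongr)
  have hE4 := (lam_coeff_isBigO hq hρq).mul (sum_div_isBigO ht hρ1)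
  rw [← hsq] at hE4
  have hle : (fun n : ℕ => (ρ ^ 2) ^ n) =O[atTop] (fun _ => (1 : ℝ)) := by
    rw [hsq]; simpa using hY.mul hY
  have hP : (fun n : ℕ => ∏ i, (1 - (t i / (q : ℂ)) ^ n)) =O[atTop] (fun _ => (1 : ℝ)) := by
    have h1 : (fun _ : ℕ => (1 : ℂ)) =O[atTop] (fun _ : ℕ => (1 : ℝ)) :=
      isBigO_const_const _ one_ne_zero _
    refine (((hE1.trans hle).sub (hS.trans hY)).add h1).congr_left fun n => ?_
    ring
  have hF := ((hE3.add hE2).add hE4).mul hP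
  have hSE := (hS.trans hY).mul hE1
  have hSS := hS.mul hS
  rw [← hsq] at hSS
  simp only [mul_one, one_mul] at hF hSE
  -- `(1 + S + F) * P - 1 = -S² + E + S * E + F * P` when `P = 1 - S + E`
  refine (((hE1.sub hSS).add hSE).add hF).congr' ?_ EventuallyEq.rfl
  -- at `n = 0` the factor `1 - xᵢ` vanishes
  filter_upwards [eventually_ge_atTop 1] with n hn
  have hT : ∑ i, ((t i / (q : ℂ)) ^ n / (1 - (t i / (q : ℂ)) ^ n)) =
      ∑ i, (t i / (q : ℂ)) ^ n + ∑ i, (t i / (q : ℂ)) ^ n *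
      ((t i / (q : ℂ)) ^ n * (1 - (t i / (q : ℂ)) ^ n)⁻¹) := by
    rw [← Finset.sum_add_distrib]
    refine Finset.sum_congr rfl fun i _ => ?_
    have hne : 1 - (t i / (q : ℂ)) ^ n ≠ 0 := by
      intro h0
      have h1 : ‖(t i / (q : ℂ)) ^ n‖ < 1 := by
        rw [norm_pow]
        exact pow_lt_one₀ (norm_nonneg _) ((ht i).trans_lt hρ1) (by omega)
      rw [← sub_eq_zero.mp h0] at h1
      simp at h1
    generalize (t i / (q : ℂ)) ^ n = x at hne
    field_simp
    ring
  unfold Lam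
  rw [hT]
  ring

end LocalFactor

/-- For every `r ≥ 1` there exists `δ > 0`, depending only on `r` and not on `q`, such
that for every finite field of cardinality `q`, the product
`∏_c [Λ_c(t) ∏ᵢ (1 − (tᵢ/q)^{|c|})]` converges absolutely whenever `|tᵢ| ≤ q^δ` for all
`i`; in particular `∏_c Λ_c(t)` converges absolutely on the open unit polydisc. -/
theorem zeta_product_absolutely_convergent (r : ℕ) (hr : 1 ≤ r) :
    ∃ δ : ℝ, 0 < δ ∧
      ∀ (K : Type) [Field K] [Fintype K],
        (∀ t : Fin r → ℂ, (∀ i, ‖t i‖ ≤ (Fintype.card K : ℝ) ^ δ) →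
          Summable (fun cp : ClosedPoint K =>
            ‖Lam (Fintype.card K) r (cpDeg cp) t *
                ∏ i, (1 - (t i / (Fintype.card K : ℂ)) ^ (cpDeg cp)) - 1‖)) ∧
        (∀ t : Fin r → ℂ, (∀ i, ‖t i‖ < 1) →
          Summable (fun cp : ClosedPoint K =>
            ‖Lam (Fintype.card K) r (cpDeg cp) t - 1‖)) := by
  -- any `δ < 1 / 2` gives `q * (q ^ δ / q) ^ 2 < 1`
  refine ⟨1 / 4, by norm_num, fun K _ _ => ?_⟩
  have hq : 1 < Fintype.card K := Fintype.one_lt_card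
  generalize hqdef : Fintype.card K = q at hq ⊢
  have hq' : (1 : ℝ) < q := by exact_mod_cast hq
  have hq0 : (0 : ℝ) < q := by linarith
  refine ⟨fun t ht => ?_, fun t ht => ?_⟩
  · have hexp : (q : ℝ) ^ (1 / 4 : ℝ) / q = (q : ℝ) ^ (-(3 / 4) : ℝ) := by
      rw [← Real.rpow_sub_one hq0.ne']; norm_num
    refine summable_cpDeg_of_isBigO K
      (fun n => Lam q r n t * ∏ i, (1 - (t i / (q : ℂ)) ^ n) - 1)
      (((q : ℝ) ^ (1 / 4 : ℝ) / q) ^ 2) (by positivity) ?_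
      (lam_mul_prod_isBigO hq.le ?_ ?_ fun i => ?_)
    · rw [hqdef, hexp, ← Real.rpow_natCast, ← Real.rpow_mul hq0.le]
      nth_rewrite 1 [← Real.rpow_one (q : ℝ)]
      rw [← Real.rpow_add hq0]
      exact Real.rpow_lt_one_of_one_lt_of_neg hq' (by norm_num)
    · rw [inv_eq_one_div]
      gcongr
      exact Real.one_le_rpow hq'.le (by norm_num)
    · rw [hexp]
      exact Real.rpow_lt_one_of_one_lt_of_neg hq' (by norm_num)
    · rw [norm_div, Complex.norm_natCast]
      gcongr
      exact ht i
  -- `1 / q` enters the maximum so that the `O(q⁻²ⁿ)` terms of `Λ` are also `O((τ / q) ^ n)`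
  · have hτ : max ‖t‖ (q : ℝ)⁻¹ < 1 :=
      max_lt ((pi_norm_lt_iff zero_lt_one).2 ht) (inv_lt_one_of_one_lt₀ hq')
    have hτ0 : 0 ≤ max ‖t‖ (q : ℝ)⁻¹ := le_max_of_le_left (norm_nonneg _)
    refine summable_cpDeg_of_isBigO K (fun n => Lam q r n t - 1)
      (max ‖t‖ (q : ℝ)⁻¹ / q) (by positivity) ?_
      (lam_sub_one_isBigO hq.le ?_ ?_ fun i => ?_)
    · rw [hqdef, mul_div_cancel₀ _ hq0.ne']
      exact hτ
    · rw [pow_two, mul_inv, ← div_eq_mul_inv]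
      gcongr
      exact le_max_right _ _
    · exact (div_le_self hτ0 hq'.le).trans_lt hτ
    · rw [norm_div, Complex.norm_natCast]
      gcongr
      exact (norm_le_pi_norm t i).trans (le_max_left _ _)

end
end

section
/- Let q be a prime power and r ≥ 1 an integer. The product ∏_c Λ_c(t₁,…,t_r) over all closed points c of ℙ¹ over 𝔽_q converges for all (t₁,…,t_r) ∈ [0,1)^r, the product ∏_c (1−q^{−|c|})^{r+2}(1 + (r+2)q^{−|c|} + q^{−2|c|}) converges absolutely, and lim_{(t₁,…,t_r)→(1,…,1), t_i ∈ [0,1)} (∏_{i=1}^r (1 − t_i)) · ∏_c Λ_c(t₁,…,t_r) = (1−q^{−1})^{−r} · ∏_c (1−q^{−|c|})^{r+2}(1 + (r+2)q^{−|c|} + q^{−2|c|}). -/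
/-!
Write `q` for the cardinality of `K`, `n` for the degree of a closed point and `x = q ^ (-n)`,
`y i = (t i / q) ^ n`. Expanding, `Λ = 1 + ∑ y i + O(x ^ 2)`, so the regularised factor
`Λ * ∏ (1 - y i)` (`regFactor`) is `1 + O(x ^ 2)`, uniformly in `t ∈ [0, 1] ^ r`
(`abs_regFactor_sub_one_le`). As `∑ q ^ (-2 |c|)` converges over the closed points, the product
of the regularised factors converges absolutely and, by dominated convergence, is continuous at
`t = (1, …, 1)`, where the factors are exactly the Tamagawa factors (`regFactor_one`).

The factors divided out are those of the zeta function of `ℙ¹`: for `0 ≤ u < 1 / q` one has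
`∏ (1 - u ^ |c|) = (1 - q u) (1 - u)` (`hasProd_closedPoint`). With `u = t i / q` this is
`(1 - t i) (1 - t i / q)`; its first factor is the one that `∏ (1 - t i)` compensates, and the second
tends to `1 - q⁻¹`, which gives the constant `(1 - q⁻¹) ^ (-r)`.

The Euler product itself comes from a sieve. The sum of `u ^ deg f` over all monic `f` is
`1 / (1 - q u)`. Removing the multiples of each irreducible in a finite set `S` multiplies it by
`∏_{p ∈ S} (1 - u ^ deg p)` (`hasSum_sieved`), and as `S` exhausts the irreducibles only `f = 1`
survives.
-/

open scoped BigOperators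
open Filter

noncomputable section

/-- The local Euler factor `(1 − q^{−n})^{r+2} (1 + (r+2) q^{−n} + q^{−2n})` of the
Tamagawa number at a closed point of degree `n`. -/
def tauFactor (q r n : ℕ) : ℝ :=
  (1 - ((q : ℝ)⁻¹) ^ n) ^ (r + 2) *
    (1 + (r + 2) * ((q : ℝ)⁻¹) ^ n + ((q : ℝ)⁻¹) ^ (2 * n))

/-- The local factor `Λ_c` of the virtual height zeta function at a closed point of
degree `n` (real version). -/
def LamR (q r n : ℕ) (t : Fin r → ℝ) : ℝ :=
  1 - (r + 2 : ℝ) * ((q : ℝ) ^ (2 * n))⁻¹ + 2 * (r : ℝ) * ((q : ℝ) ^ (3 * n))⁻¹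
    - ((r : ℝ) - 1) * ((q : ℝ) ^ (4 * n))⁻¹
    + (1 - 2 * ((q : ℝ) ^ n)⁻¹ + 2 * ((q : ℝ) ^ (3 * n))⁻¹ - ((q : ℝ) ^ (4 * n))⁻¹) *
      ∑ i : Fin r, ((t i / (q : ℝ)) ^ n / (1 - (t i / (q : ℝ)) ^ n))

/-! ### The zeta function of the projective line -/

open scoped Polynomial
open Polynomial (monic_one degreeLTEquiv monicEquivDegreeLT eq_of_monic_of_associated
  exists_monic_irreducible_factor)

/-- The monic polynomials over `K`, i.e. the effective divisors of the affine line. -/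
abbrev MonicPoly (K : Type) [Field K] : Type := {f : K[X] // f.Monic}

/-- The monic irreducible polynomials over `K`, i.e. the closed points of the affine line. -/
abbrev MonicIrred (K : Type) [Field K] : Type := {p : K[X] // p.Monic ∧ Irreducible p}

section Zeta

variable {K : Type} [Field K] [Fintype K]

lemma card_monic_natDegree (n : ℕ) :
    Nat.card {f : MonicPoly K // f.1.natDegree = n} = Fintype.card K ^ n := by
  have e : {f : MonicPoly K // f.1.natDegree = n} ≃ (Fin n → K) :=
    (Equiv.subtypeSubtypeEquivSubtypeInter (fun f : K[X] => f.Monic)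
      (fun f => f.natDegree = n)).trans
      ((monicEquivDegreeLT n).trans (degreeLTEquiv K n).toEquiv)
  rw [Nat.card_congr e]
  simp

/-- The zeta function of the affine line as a Dirichlet series: there are `q ^ n` monic
polynomials of degree `n`. -/
lemma hasSum_monic {u : ℝ} (hu0 : 0 ≤ u) (hu : (Fintype.card K : ℝ) * u < 1) :
    HasSum (fun f : MonicPoly K => u ^ f.1.natDegree) (1 - (Fintype.card K : ℝ) * u)⁻¹ := by
  have hgeo := hasSum_geometric_of_lt_one (by positivity : 0 ≤ (Fintype.card K : ℝ) * u) hu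
  rw [← (Equiv.sigmaFiberEquiv (fun f : MonicPoly K => f.1.natDegree)).hasSum_iff]
  have hfin (n : ℕ) : Finite {f : MonicPoly K // f.1.natDegree = n} :=
    Nat.finite_of_card_ne_zero (by rw [card_monic_natDegree]; positivity)
  have hfib (n : ℕ) : HasSum (fun f : {f : MonicPoly K // f.1.natDegree = n} =>
      u ^ f.1.1.natDegree) (((Fintype.card K : ℝ) * u) ^ n) := by
    have := Fintype.ofFinite {f : MonicPoly K // f.1.natDegree = n}
    convert hasSum_fintype (fun f : {f : MonicPoly K // f.1.natDegree = n} =>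
      u ^ f.1.1.natDegree) using 1
    rw [Finset.sum_congr (g := fun _ => u ^ n) rfl (fun f _ => congrArg (u ^ ·) f.2), Finset.sum_const, Finset.card_univ,
      ← Nat.card_eq_fintype_card (α := {f : MonicPoly K // _}), card_monic_natDegree,
      nsmul_eq_mul, mul_pow, Nat.cast_pow]
  have hsum : Summable ((fun f : MonicPoly K => u ^ f.1.natDegree) ∘
      (Equiv.sigmaFiberEquiv (fun f : MonicPoly K => f.1.natDegree))) := by
    refine (summable_sigma_of_nonneg fun x => by simp only [Function.comp]; positivity).2
      ⟨fun n => (hfib n).summable, ?_⟩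
    refine hgeo.summable.congr fun n => ?_
    exact (hfib n).tsum_eq.symm
  have h2 := hsum.hasSum.sigma (fun n => hfib n)
  rw [← h2.unique hgeo]
  exact hsum.hasSum

lemma summable_monicIrred {u : ℝ} (hu0 : 0 ≤ u) (hu : (Fintype.card K : ℝ) * u < 1) :
    Summable (fun p : MonicIrred K => u ^ p.1.natDegree) :=
  (hasSum_monic hu0 hu).summable.comp_injective
    (i := fun p : MonicIrred K => (⟨p.1, p.2.1⟩ : MonicPoly K))
    (fun _ _ h => Subtype.ext (Subtype.mk.inj h))

open Classical in
/-- The weight `u ^ deg f` of a monic polynomial `f`, sieved by a finite set `S` of irreducibles: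
it is kept only if no element of `S` divides `f`. -/
def sieved (u : ℝ) (S : Finset (MonicIrred K)) (f : MonicPoly K) : ℝ :=
  if ∀ p ∈ S, ¬ p.1 ∣ f.1 then u ^ f.1.natDegree else 0

/-- Distinct monic irreducibles are coprime, so sieving by `p` after `S` removes exactly
the `p`-multiples of the survivors and multiplies the total weight by `1 - u ^ deg p`. -/
lemma hasSum_sieved {u : ℝ} (hu0 : 0 ≤ u) (hu : (Fintype.card K : ℝ) * u < 1)
    (S : Finset (MonicIrred K)) :
    HasSum (sieved u S)
      ((∏ p ∈ S, (1 - u ^ p.1.natDegree)) * (1 - (Fintype.card K : ℝ) * u)⁻¹) := by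
  classical
  induction S using Finset.induction_on with
  | empty =>
    have : sieved u (∅ : Finset (MonicIrred K)) = fun f => u ^ f.1.natDegree := by
      ext f; simp [sieved]
    simpa [this] using hasSum_monic (K := K) hu0 hu
  | insert p S hp ih =>
    set a := (∏ p ∈ S, (1 - u ^ p.1.natDegree)) * (1 - (Fintype.card K : ℝ) * u)⁻¹ with ha
    have hinj : Function.Injective
        (fun f : MonicPoly K => (⟨p.1 * f.1, p.2.1.mul f.2⟩ : MonicPoly K)) := by
      intro f g h
      exact Subtype.ext (mul_left_cancel₀ p.2.1.ne_zero (congrArg Subtype.val h))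
    have hmul : HasSum (fun f : MonicPoly K => if p.1 ∣ f.1 then sieved u S f else 0)
        (u ^ p.1.natDegree * a) := by
      rw [← hinj.hasSum_iff]
      · refine (ih.mul_left (u ^ p.1.natDegree)).congr_fun fun f => ?_
        have hdvd : ∀ p' ∈ S, (p'.1 ∣ p.1 * f.1 ↔ p'.1 ∣ f.1) := by
          intro p' hp'
          refine ⟨fun h => ?_, fun h => h.mul_left _⟩
          refine (p'.2.2.prime.dvd_or_dvd h).resolve_left fun h' => hp ?_
          have : p' = p := Subtype.ext (eq_of_monic_of_associated p'.2.1 p.2.1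
            (p'.2.2.associated_of_dvd p.2.2 h'))
          exact this ▸ hp'
        have hiff : (∀ p' ∈ S, ¬ p'.1 ∣ p.1 * f.1) ↔ ∀ p' ∈ S, ¬ p'.1 ∣ f.1 :=
          forall₂_congr fun p' hp' => not_congr (hdvd p' hp')
        simp only [Function.comp, dvd_mul_right, if_true, sieved, hiff, mul_ite, mul_zero,
          p.2.1.natDegree_mul f.2, pow_add]
      · intro f hf
        rw [if_neg]
        rintro ⟨g, hg⟩
        exact hf ⟨⟨g, p.2.1.of_mul_monic_left (hg ▸ f.2)⟩, Subtype.ext hg.symm⟩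
    have := ih.sub hmul
    rw [Finset.prod_insert hp]
    rw [mul_assoc, ← ha, sub_mul, one_mul]
    refine this.congr_fun fun f => ?_
    simp only [sieved, Finset.forall_mem_insert]
    split_ifs <;> simp_all

/-- The Euler product of the zeta function of the affine line. -/
lemma hasProd_affine {u : ℝ} (hu0 : 0 ≤ u) (hu : (Fintype.card K : ℝ) * u < 1) :
    HasProd (fun p : MonicIrred K => 1 - u ^ p.1.natDegree) (1 - (Fintype.card K : ℝ) * u) := by
  classical
  have hne : 1 - (Fintype.card K : ℝ) * u ≠ 0 := by linarith
  -- Only `f = 1` survives sieving by all irreducibles.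
  have hlim := tendsto_tsum_of_dominated_convergence (𝓕 := atTop)
    (f := fun (S : Finset (MonicIrred K)) f => sieved u S f)
    (g := fun f : MonicPoly K => if f = ⟨1, monic_one⟩ then 1 else 0)
    (hasSum_monic (K := K) hu0 hu).summable ?_ ?_
  · simp only [(hasSum_sieved hu0 hu _).tsum_eq, tsum_ite_eq] at hlim
    have := hlim.mul_const (1 - (Fintype.card K : ℝ) * u)
    simpa [HasProd, mul_assoc, inv_mul_cancel₀ hne] using this
  · intro f
    by_cases hf : f = ⟨1, monic_one⟩
    · subst hf
      refine tendsto_const_nhds.congr fun S => ?_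
      have : ∀ p ∈ S, ¬ p.1 ∣ (1 : K[X]) := fun p _ h => p.2.2.not_isUnit (isUnit_of_dvd_one h)
      rw [sieved, if_pos this]
      simp
    · have hu' : ¬ IsUnit f.1 := fun h => hf (Subtype.ext (f.2.eq_one_of_isUnit h))
      obtain ⟨p, hpm, hpi, hpd⟩ := exists_monic_irreducible_factor f.1 hu'
      refine tendsto_const_nhds.congr' ?_
      filter_upwards [eventually_ge_atTop {⟨p, hpm, hpi⟩}] with S hS
      rw [if_neg hf, sieved, if_neg]
      exact fun h => h ⟨p, hpm, hpi⟩ (hS (Finset.mem_singleton_self _)) hpd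
  · refine Eventually.of_forall fun S f => ?_
    unfold sieved
    split_ifs
    · rw [Real.norm_of_nonneg (by positivity)]
    · rw [norm_zero]; positivity

/-- The zeta function of `ℙ¹`, inverted: the point at infinity contributes `1 - u`. -/
lemma hasProd_closedPoint {u : ℝ} (hu0 : 0 ≤ u) (hu : (Fintype.card K : ℝ) * u < 1) :
    HasProd (fun c : ClosedPoint K => 1 - u ^ cpDeg c)
      ((1 - (Fintype.card K : ℝ) * u) * (1 - u)) := by
  refine HasProd.sum (f := fun c : ClosedPoint K => 1 - u ^ cpDeg c)
    (hasProd_affine hu0 hu) ?_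
  refine (hasProd_unique (fun _ : Unit => 1 - u)).congr_fun fun c => ?_
  change 1 - u ^ 1 = 1 - u
  rw [pow_one]

lemma summable_closedPoint {u : ℝ} (hu0 : 0 ≤ u) (hu : (Fintype.card K : ℝ) * u < 1) :
    Summable (fun c : ClosedPoint K => u ^ cpDeg c) := by
  refine ⟨_, HasSum.sum (f := fun c : ClosedPoint K => u ^ cpDeg c)
    (summable_monicIrred hu0 hu).hasSum (hasSum_unique _)⟩

end Zeta

/-! ### The local factors -/

section Local

variable {r : ℕ}

/-- The local factor after division by the local zeta factors of the `t i / q`. -/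
def regFactor (q r n : ℕ) (t : Fin r → ℝ) : ℝ :=
  LamR q r n t * ∏ i, (1 - (t i / q) ^ n)

lemma abs_prod_one_sub_le {ι : Type*} (s : Finset ι) {x : ℝ} {y : ι → ℝ}
    (hy0 : ∀ i, 0 ≤ y i) (hyx : ∀ i, y i ≤ x) (hx1 : x ≤ 1) :
    |∏ i ∈ s, (1 - y i)| ≤ 1 := by
  rw [Finset.abs_prod]
  refine Finset.prod_le_one (fun _ _ => abs_nonneg _) fun i _ => ?_
  rw [abs_le]
  constructor <;> linarith [hy0 i, hyx i]

lemma abs_prod_one_sub_sub_one_le {ι : Type*} (s : Finset ι) {x : ℝ} {y : ι → ℝ}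
    (hy0 : ∀ i, 0 ≤ y i) (hyx : ∀ i, y i ≤ x) (hx1 : x ≤ 1) :
    |∏ i ∈ s, (1 - y i) - 1| ≤ s.card * x := by
  classical
  induction s using Finset.induction_on with
  | empty => simp
  | insert i s hi ih =>
    rw [Finset.prod_insert hi, Finset.card_insert_of_notMem hi]
    set P := ∏ i ∈ s, (1 - y i)
    have h1 := abs_prod_one_sub_le s hy0 hyx hx1
    have h2 : |y i * P| ≤ x := by
      rw [abs_mul, abs_of_nonneg (hy0 i)]
      nlinarith [hy0 i, hyx i, abs_nonneg P]
    calc |(1 - y i) * P - 1| = |(P - 1) - y i * P| := by ring_nf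
      _ ≤ |P - 1| + |y i * P| := abs_sub _ _
      _ ≤ _ := by push_cast; linarith

lemma abs_prod_one_sub_expand_le {ι : Type*} (s : Finset ι) {x : ℝ} {y : ι → ℝ}
    (hy0 : ∀ i, 0 ≤ y i) (hyx : ∀ i, y i ≤ x) (hx0 : 0 ≤ x) (hx1 : x ≤ 1) :
    |∏ i ∈ s, (1 - y i) - 1 + ∑ i ∈ s, y i| ≤ (s.card : ℝ) ^ 2 * x ^ 2 := by
  classical
  induction s using Finset.induction_on with
  | empty => simp
  | insert i s hi ih =>
    rw [Finset.prod_insert hi, Finset.sum_insert hi, Finset.card_insert_of_notMem hi]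
    set P := ∏ i ∈ s, (1 - y i)
    set S := ∑ i ∈ s, y i
    have h1 := abs_prod_one_sub_sub_one_le s hy0 hyx hx1
    have h2 : |y i * (P - 1)| ≤ x * (s.card * x) := by
      rw [abs_mul, abs_of_nonneg (hy0 i)]
      exact mul_le_mul (hyx i) h1 (abs_nonneg _) hx0
    have h3 : 0 ≤ (s.card : ℝ) * x ^ 2 := by positivity
    calc |(1 - y i) * P - 1 + (y i + S)| = |(P - 1 + S) - y i * (P - 1)| := by ring_nf
      _ ≤ |P - 1 + S| + |y i * (P - 1)| := abs_sub _ _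
      _ ≤ _ := by push_cast; nlinarith [sq_nonneg x]

/-- Multiplying by `∏ (1 - y i)` cancels the first-order term `∑ y i` of the local factor, so
only second-order terms in `x = q ^ (-n)` are left. -/
lemma abs_local_le {x : ℝ} {y : Fin r → ℝ} (hx0 : 0 ≤ x) (hx1 : x ≤ 1 / 2)
    (hy0 : ∀ i, 0 ≤ y i) (hyx : ∀ i, y i ≤ x) :
    |(1 - (r + 2 : ℝ) * x ^ 2 + 2 * r * x ^ 3 - ((r : ℝ) - 1) * x ^ 4
      + (1 - 2 * x + 2 * x ^ 3 - x ^ 4) * ∑ i, y i / (1 - y i)) * ∏ i, (1 - y i) - 1|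
      ≤ ((16 * r + 3) + (1 + r) * r ^ 2 + r ^ 2) * x ^ 2 := by
  set P := ∏ i, (1 - y i) with hP
  set S := ∑ i, y i with hS
  set T := ∑ i, y i / (1 - y i) with hT
  have hr : (0 : ℝ) ≤ r := Nat.cast_nonneg r
  have hden (i : Fin r) : 1 / 2 ≤ 1 - y i := by linarith [hyx i]
  have hT0 : 0 ≤ T := Finset.sum_nonneg fun i _ => div_nonneg (hy0 i) (by linarith [hden i])
  have hT1 : T ≤ r * (2 * x) := by
    have : ∀ i ∈ Finset.univ, y i / (1 - y i) ≤ 2 * x := fun i _ => by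
      rw [div_le_iff₀ (by linarith [hden i])]
      nlinarith [hden i, hyx i]
    simpa using Finset.sum_le_card_nsmul _ _ _ this
  have hS0 : 0 ≤ S := Finset.sum_nonneg fun i _ => hy0 i
  have hS1 : S ≤ r * x := by
    simpa using Finset.sum_le_card_nsmul Finset.univ y x fun i _ => hyx i
  have hTS : |T - S| ≤ r * (2 * x ^ 2) := by
    rw [hT, hS, ← Finset.sum_sub_distrib]
    have : ∀ i ∈ Finset.univ, |y i / (1 - y i) - y i| ≤ 2 * x ^ 2 := fun i _ => by
      have h : 0 < 1 - y i := by linarith [hden i]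
      have : y i / (1 - y i) - y i = y i ^ 2 / (1 - y i) := by field_simp; ring
      rw [this, abs_of_nonneg (by positivity), div_le_iff₀ h]
      have : y i ^ 2 ≤ x ^ 2 := pow_le_pow_left₀ (hy0 i) (hyx i) 2
      nlinarith [hden i, sq_nonneg x]
    refine (Finset.abs_sum_le_sum_abs _ _).trans ?_
    simpa using Finset.sum_le_card_nsmul _ _ _ this
  have hP1 : |P| ≤ 1 := abs_prod_one_sub_le _ hy0 hyx (by linarith)
  have hP2 : |P - 1 + S| ≤ (r : ℝ) ^ 2 * x ^ 2 := by
    simpa using abs_prod_one_sub_expand_le Finset.univ hy0 hyx hx0 (by linarith)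
  have hx2 : x ^ 2 ≤ 1 := by nlinarith
  have hx3 : x ^ 3 ≤ 1 := pow_le_one₀ hx0 (by linarith)
  have hx3' : 0 ≤ x ^ 3 := by positivity
  have hA : |-(r + 2 : ℝ) + 2 * r * x - ((r : ℝ) - 1) * x ^ 2| ≤ 4 * (r : ℝ) + 3 := by
    rw [abs_le]
    constructor <;> nlinarith [mul_nonneg hr hx0, mul_nonneg hr (sq_nonneg x), sq_nonneg x]
  have hB : |-2 + 2 * x ^ 2 - x ^ 3| ≤ 5 := by
    rw [abs_le]
    constructor <;> nlinarith [sq_nonneg x]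
  have hE : |x ^ 2 * (-(r + 2 : ℝ) + 2 * r * x - ((r : ℝ) - 1) * x ^ 2)
      + x * (-2 + 2 * x ^ 2 - x ^ 3) * T + (T - S)| ≤ (16 * r + 3) * x ^ 2 := by
    have h1 : |x ^ 2 * (-(r + 2 : ℝ) + 2 * r * x - ((r : ℝ) - 1) * x ^ 2)|
        ≤ x ^ 2 * (4 * r + 3) := by
      rw [abs_mul, abs_of_nonneg (sq_nonneg x)]; gcongr
    have h2 : |x * (-2 + 2 * x ^ 2 - x ^ 3) * T| ≤ x * 5 * (r * (2 * x)) := by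
      rw [abs_mul, abs_mul, abs_of_nonneg hx0, abs_of_nonneg hT0]; gcongr
    refine (abs_add_three _ _ _).trans ?_
    nlinarith
  set E := x ^ 2 * (-(r + 2 : ℝ) + 2 * r * x - ((r : ℝ) - 1) * x ^ 2)
      + x * (-2 + 2 * x ^ 2 - x ^ 3) * T + (T - S) with hEdef
  have h1 : |E * P| ≤ (16 * r + 3) * x ^ 2 := by
    rw [abs_mul]; nlinarith [abs_nonneg E, abs_nonneg P]
  have h2 : |(1 + S) * (P - 1 + S)| ≤ (1 + r) * (r ^ 2 * x ^ 2) := by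
    rw [abs_mul, abs_of_nonneg (by linarith)]
    gcongr
    nlinarith
  have h3 : |-S ^ 2| ≤ r ^ 2 * x ^ 2 := by
    rw [abs_neg, abs_of_nonneg (sq_nonneg S), ← mul_pow]
    exact pow_le_pow_left₀ hS0 hS1 2
  -- With `Λ = 1 + S + E`: `Λ P - 1 = E P + (1 + S) (P - 1 + S) + (1 + S) (1 - S) - 1`.
  calc _ = |E * P + (1 + S) * (P - 1 + S) + -S ^ 2| := by rw [hEdef]; congr 1; ring
    _ ≤ _ := abs_add_three _ _ _
    _ ≤ _ := by linarith

/-- The constant of the second-order bound on `regFactor - 1`. -/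
def regConst (r : ℕ) : ℝ := (16 * r + 3) + (1 + r) * r ^ 2 + r ^ 2

lemma abs_regFactor_sub_one_le {q n : ℕ} (hq : 2 ≤ q) (hn : 1 ≤ n) {t : Fin r → ℝ}
    (ht : ∀ i, t i ∈ Set.Icc (0 : ℝ) 1) :
    |regFactor q r n t - 1| ≤ regConst r * ((q : ℝ)⁻¹ ^ 2) ^ n := by
  have hq' : (2 : ℝ) ≤ q := by exact_mod_cast hq
  have hqi : (q : ℝ)⁻¹ ≤ 1 / 2 := by rw [one_div]; exact inv_anti₀ (by norm_num) hq'
  have hx0 : 0 ≤ (q : ℝ)⁻¹ ^ n := by positivity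
  have hx1 : (q : ℝ)⁻¹ ^ n ≤ 1 / 2 :=
    (pow_le_of_le_one (by positivity) (by linarith) (by omega)).trans hqi
  have hy0 (i : Fin r) : 0 ≤ (t i / q) ^ n := pow_nonneg (div_nonneg (ht i).1 (by positivity)) n
  have hyx (i : Fin r) : (t i / q) ^ n ≤ (q : ℝ)⁻¹ ^ n := by
    refine pow_le_pow_left₀ (div_nonneg (ht i).1 (by positivity)) ?_ n
    rw [div_eq_mul_inv]
    exact mul_le_of_le_one_left (by positivity) (ht i).2
  have := abs_local_le hx0 hx1 hy0 hyx
  rw [regFactor, LamR, regConst]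
  convert this using 2
  · simp only [← pow_mul, inv_pow, mul_comm]
  · ring

/-- At `t = 1` the regularised factor is the Tamagawa factor. -/
lemma regFactor_one {q n : ℕ} (hq : 2 ≤ q) (hn : 1 ≤ n) :
    regFactor q r n (fun _ => 1) = tauFactor q r n := by
  have hq' : (2 : ℝ) ≤ q := by exact_mod_cast hq
  have hlt : ((q : ℝ)⁻¹) ^ n < 1 :=
    pow_lt_one₀ (by positivity) (inv_lt_one_of_one_lt₀ (by linarith)) (by omega)
  have hne : 1 - ((q : ℝ)⁻¹) ^ n ≠ 0 := by linarith
  simp only [regFactor, tauFactor, LamR, one_div, Finset.sum_const, Finset.prod_const,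
    Finset.card_univ, Fintype.card_fin, nsmul_eq_mul, ← inv_pow, pow_mul', mul_comm _ n]
  set x := ((q : ℝ)⁻¹) ^ n
  simp only [← pow_mul, mul_comm _ n]
  field_simp
  ring

lemma continuousAt_regFactor_one {q n : ℕ} (hq : 2 ≤ q) (hn : 1 ≤ n) :
    ContinuousAt (regFactor q r n) (fun _ => 1) := by
  have hq' : (2 : ℝ) ≤ q := by exact_mod_cast hq
  have hlt : ((1 : ℝ) / q) ^ n < 1 :=
    pow_lt_one₀ (by positivity) (by rw [div_lt_one] <;> linarith) (by omega)
  have hne : 1 - ((1 : ℝ) / q) ^ n ≠ 0 := by linarith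
  have hy (i : Fin r) : ContinuousAt (fun t : Fin r → ℝ => (t i / q) ^ n) (fun _ => 1) :=
    ((continuousAt_apply i _).div_const _).pow n
  have hden (i : Fin r) := (continuousAt_const (y := (1 : ℝ))).sub (hy i)
  refine ContinuousAt.mul (continuousAt_const.add (continuousAt_const.mul ?_)) ?_
  · exact tendsto_finsetSum _ fun i _ => (hy i).div (hden i) hne
  · exact tendsto_finsetProd _ fun i _ => hden i

lemma LamR_eq {q n : ℕ} (hq : 2 ≤ q) (hn : 1 ≤ n) {t : Fin r → ℝ}
    (ht : ∀ i, t i ∈ Set.Icc (0 : ℝ) 1) :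
    LamR q r n t = regFactor q r n t * (∏ i, (1 - (t i / q) ^ n))⁻¹ := by
  have hq' : (2 : ℝ) ≤ q := by exact_mod_cast hq
  rw [regFactor, mul_inv_cancel_right₀]
  refine Finset.prod_ne_zero_iff.2 fun i _ => ?_
  have : (t i / q) ^ n < 1 := pow_lt_one₀ (div_nonneg (ht i).1 (by positivity))
    (by rw [div_lt_one] <;> linarith [(ht i).2]) (by omega)
  linarith

end Local

lemma one_le_cpDeg {K : Type} [Field K] (c : ClosedPoint K) : 1 ≤ cpDeg c := by
  rcases c with p | _
  · exact p.2.2.natDegree_pos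
  · exact le_rfl

/-! ### The limit -/

/-- For a finite field of cardinality `q` and `r ≥ 1`: the product `∏_c Λ_c(t)`
converges for all `t ∈ [0,1)^r`, the product
`∏_c (1−q^{−|c|})^{r+2}(1+(r+2)q^{−|c|}+q^{−2|c|})` converges absolutely, and
`(∏ᵢ (1−tᵢ)) ∏_c Λ_c(t) → (1−q^{−1})^{−r} ∏_c (1−q^{−|c|})^{r+2}(1+(r+2)q^{−|c|}+q^{−2|c|})`
as `t → (1,…,1)` within `[0,1)^r`. -/
theorem zeta_product_limit_at_one (K : Type) [Field K] [Fintype K]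
    (r : ℕ) (hr : 1 ≤ r) :
    (∀ t : Fin r → ℝ, (∀ i, t i ∈ Set.Ico (0 : ℝ) 1) →
      Multipliable (fun cp : ClosedPoint K => LamR (Fintype.card K) r (cpDeg cp) t)) ∧
    Summable (fun cp : ClosedPoint K =>
      ‖tauFactor (Fintype.card K) r (cpDeg cp) - 1‖) ∧
    Tendsto
      (fun t : Fin r → ℝ =>
        (∏ i, (1 - t i)) * ∏' cp : ClosedPoint K, LamR (Fintype.card K) r (cpDeg cp) t)
      (nhdsWithin (fun _ => 1) {t : Fin r → ℝ | ∀ i, t i ∈ Set.Ico (0 : ℝ) 1})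
      (nhds (((1 - (Fintype.card K : ℝ)⁻¹)⁻¹) ^ r *
        ∏' cp : ClosedPoint K, tauFactor (Fintype.card K) r (cpDeg cp))) := by
  set q := Fintype.card K with hqdef
  have hq : 2 ≤ q := Fintype.one_lt_card
  have hq' : (2 : ℝ) ≤ q := by exact_mod_cast hq
  have hsub : ∀ t : Fin r → ℝ, (∀ i, t i ∈ Set.Ico (0 : ℝ) 1) → ∀ i, t i ∈ Set.Icc (0 : ℝ) 1 :=
    fun t ht i => Set.Ico_subset_Icc_self (ht i)
  have hbound (t : Fin r → ℝ) (ht : ∀ i, t i ∈ Set.Icc (0 : ℝ) 1) (c : ClosedPoint K) :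
      ‖regFactor q r (cpDeg c) t - 1‖ ≤ regConst r * ((q : ℝ)⁻¹ ^ 2) ^ cpDeg c :=
    abs_regFactor_sub_one_le hq (one_le_cpDeg c) ht
  have hsumm : Summable (fun c : ClosedPoint K => regConst r * ((q : ℝ)⁻¹ ^ 2) ^ cpDeg c) := by
    refine (summable_closedPoint (by positivity) ?_).mul_left _
    rw [← hqdef, sq, mul_inv_cancel_left₀ (by positivity)]
    exact inv_lt_one_of_one_lt₀ (by linarith)
  have hreg (t : Fin r → ℝ) (ht : ∀ i, t i ∈ Set.Icc (0 : ℝ) 1) :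
      Multipliable (fun c : ClosedPoint K => regFactor q r (cpDeg c) t) := by
    simpa using multipliable_one_add_of_summable (hsumm.of_nonneg_of_le
      (fun c => norm_nonneg (regFactor q r (cpDeg c) t - 1)) (hbound t ht))
  have hzeta (t : Fin r → ℝ) (ht : ∀ i, t i ∈ Set.Ico (0 : ℝ) 1) :
      HasProd (fun c : ClosedPoint K => (∏ i, (1 - (t i / q) ^ cpDeg c))⁻¹)
        (∏ i, ((1 - t i) * (1 - t i / q)))⁻¹ := by
    have hlt (i : Fin r) : t i / q < 1 := by rw [div_lt_one] <;> linarith [(ht i).2]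
    have hqt (i : Fin r) : (q : ℝ) * (t i / q) = t i := by field_simp
    refine (hasProd_prod (s := Finset.univ) fun i _ => ?_).inv₀ ?_
    · simpa only [← hqdef, hqt] using hasProd_closedPoint (K := K) (u := t i / q)
        (div_nonneg (ht i).1 (by positivity)) (by rw [← hqdef, hqt]; exact (ht i).2)
    · exact Finset.prod_ne_zero_iff.2 fun i _ =>
        mul_ne_zero (by linarith [(ht i).2]) (by linarith [hlt i])
  have hLam (t : Fin r → ℝ) (ht : ∀ i, t i ∈ Set.Ico (0 : ℝ) 1) :
      HasProd (fun c : ClosedPoint K => LamR q r (cpDeg c) t)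
        ((∏' c : ClosedPoint K, regFactor q r (cpDeg c) t)
          * (∏ i, ((1 - t i) * (1 - t i / q)))⁻¹) :=
    ((hreg t (hsub t ht)).hasProd.mul (hzeta t ht)).congr_fun fun c =>
      LamR_eq hq (one_le_cpDeg c) (hsub t ht)
  have htau (c : ClosedPoint K) :
      tauFactor q r (cpDeg c) = regFactor q r (cpDeg c) (fun _ => 1) :=
    (regFactor_one hq (one_le_cpDeg c)).symm
  refine ⟨fun t ht => (hLam t ht).multipliable, ?_, ?_⟩
  · simp only [htau]
    exact hsumm.of_nonneg_of_le (fun c => norm_nonneg _) (hbound _ fun _ => by simp)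
  · have hlimreg : Tendsto (fun t : Fin r → ℝ => ∏' c : ClosedPoint K, regFactor q r (cpDeg c) t)
        (nhdsWithin (fun _ => 1) {t : Fin r → ℝ | ∀ i, t i ∈ Set.Ico (0 : ℝ) 1})
        (nhds (∏' c : ClosedPoint K, tauFactor q r (cpDeg c))) := by
      have := tendsto_tprod_one_add_of_dominated_convergence
        (𝓕 := nhdsWithin (fun _ => 1) {t : Fin r → ℝ | ∀ i, t i ∈ Set.Ico (0 : ℝ) 1})
        (f := fun t (c : ClosedPoint K) => regFactor q r (cpDeg c) t - 1)
        (g := fun c => tauFactor q r (cpDeg c) - 1) hsumm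
        (fun c => by
          rw [htau]
          exact ((continuousAt_regFactor_one hq (one_le_cpDeg c)).mono_left
            nhdsWithin_le_nhds).sub_const 1)
        (eventually_nhdsWithin_of_forall fun t ht => hbound t (hsub t ht))
      simpa using this
    have hlimfac : Tendsto (fun t : Fin r → ℝ => ∏ i, (1 - t i / q)⁻¹)
        (nhdsWithin (fun _ => 1) {t : Fin r → ℝ | ∀ i, t i ∈ Set.Ico (0 : ℝ) 1})
        (nhds (((1 - (q : ℝ)⁻¹)⁻¹) ^ r)) := by
      have hne : 1 - (1 : ℝ) / q ≠ 0 := by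
        have : (1 : ℝ) / q < 1 := by rw [div_lt_one] <;> linarith
        linarith
      have : Tendsto (fun t : Fin r → ℝ => ∏ i, (1 - t i / q)⁻¹) (nhds fun _ => 1)
          (nhds (∏ _i : Fin r, (1 - (1 : ℝ) / q)⁻¹)) :=
        tendsto_finsetProd _ fun i _ =>
          (((continuousAt_apply i _).div_const _).const_sub 1).inv₀ hne
      simpa using this.mono_left nhdsWithin_le_nhds
    refine (hlimfac.mul hlimreg).congr' ?_
    filter_upwards [self_mem_nhdsWithin] with t ht
    have hne : ∏ i, (1 - t i) ≠ 0 :=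
      Finset.prod_ne_zero_iff.2 fun i _ => by linarith [(ht i).2]
    rw [(hLam t ht).tprod_eq, Finset.prod_mul_distrib, Finset.prod_inv_distrib]
    field_simp

end
end
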